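/- Under the Pólya urn hypotheses, let p ≥ 2 be fixed and assume that the family {|X_{n+1} − X_n|^p : n ≥ 0} is uniformly integrable. Assume also that either (a) Re λ₂ < b/2 and (X_n − E X_n)/√n converges in distribution to N(0, Σ), or (b) Re λ₂ = b/2 and (X_n − E X_n)/√(n (log n)^{2ν₂+1}) converges in distribution to N(0, Σ), where ν₂ := ν_{λ₂}. Then the corresponding convergence in distribution holds together with convergence of all absolute moments of order r with 1 ≤ r ≤ p and of all mixed moments of total degree at most p. -/

import Mathlib

/-!
The centred composition `X n - E (X n)` is a sum of innovations (martingale differences) of the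
increments, each propagated by a product of the operators `1 + (w₀ + j b)⁻¹ A`. Since the total
activity is deterministic, the innovations are annihilated by the left eigenvector `a`; as the
balance `b` is a simple eigenvalue, they have components only in the generalized eigenspaces of
the other eigenvalues, all of real part at most `b / 2`. The squared norms of the propagators
therefore add up to the order of the variance scale.

A Hilbert space has martingale type `2` in every `L^p` with `p ≥ 2`: replacing `y` by `-y` in
`‖x + y‖` and conditioning shows `‖x‖_p ≤ ‖x - y‖_p`, which reduces the claim to a two-point
inequality. Hence the normalized sums are bounded in `L^p` by the increments. Truncating the
increments splits such a sum into a part bounded in `L^(2p)` and a part small in `L^p`, so uniform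
integrability of the `p`-th powers passes from the increments to the normalized compositions, and
together with weak convergence it gives convergence of all integrals of order at most `p`.
-/

open MeasureTheory Matrix Filter

/-- `P` is the spectral projection of `A` for the eigenvalue `lam`: it is the identity
on the generalized eigenspace E_lam = ker((A − lam I)^q) and vanishes on the generalized
eigenspace E_mu = ker((A − mu I)^q) of every other eigenvalue `mu`. Since ℂ^q is the
direct sum of the generalized eigenspaces, these conditions determine `P` uniquely. -/
def IsSpectralProj {q : ℕ} (A : Matrix (Fin q) (Fin q) ℂ) (lam : ℂ)
    (P : Matrix (Fin q) (Fin q) ℂ) : Prop :=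
  (∀ v : Fin q → ℂ, ((A - lam • 1) ^ q).mulVec v = 0 → P.mulVec v = v) ∧
  ∀ mu : ℂ, mu ≠ lam → ∀ v : Fin q → ℂ, ((A - mu • 1) ^ q).mulVec v = 0 → P.mulVec v = 0

/-- `ν` is the nilpotency index ν_lam of N_lam := (A − lam I) P_lam, i.e. the unique
integer ν ≥ 0 with N_lam^(ν+1) = 0 and (ν = 0 or N_lam^ν ≠ 0). -/
def NilIndexOf {q : ℕ} (A : Matrix (Fin q) (Fin q) ℂ) (lam : ℂ)
    (P : Matrix (Fin q) (Fin q) ℂ) (ν : ℕ) : Prop :=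
  ((A - lam • 1) * P) ^ (ν + 1) = 0 ∧ (ν = 0 ∨ ((A - lam • 1) * P) ^ ν ≠ 0)

/-- `mu` is a candidate for the second eigenvalue λ₂ in the ordered listing
λ₁, λ₂, …, λ_q of the eigenvalues of `Ac` with algebraic multiplicity (λ₁ = b being
first): either `mu` is an eigenvalue different from b, or `mu = b` and b occurs with
algebraic multiplicity at least 2. -/
def MemSecondEigSet {q : ℕ} (Ac : Matrix (Fin q) (Fin q) ℂ) (b : ℝ) (mu : ℂ) : Prop :=
  (mu ≠ (b : ℂ) ∧ mu ∈ spectrum ℂ Ac) ∨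
  (mu = (b : ℂ) ∧ 2 ≤ Polynomial.rootMultiplicity (b : ℂ) (Matrix.charpoly Ac))

section MartingaleTypeTwo

variable {E : Type*} [NormedAddCommGroup E]
variable {Ω : Type*} {m m0 : MeasurableSpace Ω} {μ : Measure Ω}

lemma lintegral_enorm_rpow_eq_eLpNorm_rpow {p : ℝ} (hp : 0 < p) (x : Ω → E) :
    ∫⁻ ω, ‖x ω‖ₑ ^ p ∂μ = eLpNorm x (ENNReal.ofReal p) μ ^ p := by
  rw [lintegral_rpow_enorm_eq_rpow_eLpNorm' hp, eLpNorm_eq_eLpNorm' (by simpa) (by simp),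
    ENNReal.toReal_ofReal hp.le]

lemma lintegral_sq_add_mul_sq_rpow_le {p : ℝ} (hp : 2 ≤ p) {x y : Ω → E}
    (hx : AEStronglyMeasurable x μ) (hy : AEStronglyMeasurable y μ) (c : ENNReal) :
    ∫⁻ ω, (‖x ω‖ₑ ^ 2 + c * ‖y ω‖ₑ ^ 2) ^ (p / 2) ∂μ ≤
      (eLpNorm x (ENNReal.ofReal p) μ ^ 2 +
        c * eLpNorm y (ENNReal.ofReal p) μ ^ 2) ^ (p / 2) := by
  have hs : 0 < p / 2 := by linarith
  have sq_rpow : ∀ z : ENNReal, (z ^ 2) ^ (p / 2) = z ^ p := fun z ↦ by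
    rw [← ENNReal.rpow_two, ← ENNReal.rpow_mul]; congr 1; ring
  have root_lintegral : ∀ z : Ω → E, (∫⁻ ω, (‖z ω‖ₑ ^ 2) ^ (p / 2) ∂μ) ^ (1 / (p / 2)) =
      eLpNorm z (ENNReal.ofReal p) μ ^ 2 := fun z ↦ by
    simp only [sq_rpow]
    rw [lintegral_enorm_rpow_eq_eLpNorm_rpow (by linarith), ← ENNReal.rpow_mul, ← ENNReal.rpow_two]
    congr 1; field_simp
  have hxm := hx.enorm.pow_const 2
  have hym := hy.enorm.pow_const 2
  rw [← root_lintegral, ← root_lintegral]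
  refine (ENNReal.rpow_le_rpow_iff (one_div_pos.2 hs)).1 ?_
  rw [← ENNReal.rpow_mul _ (p / 2), mul_one_div_cancel hs.ne', ENNReal.rpow_one]
  refine (ENNReal.lintegral_Lp_add_le hxm (hym.const_mul c) (by linarith)).trans_eq ?_
  simp only [ENNReal.mul_rpow_of_nonneg _ _ hs.le]
  rw [lintegral_const_mul'' _ (hym.pow_const _),
    ENNReal.mul_rpow_of_nonneg _ _ (one_div_pos.2 hs).le, ← ENNReal.rpow_mul c,
    mul_one_div_cancel hs.ne', ENNReal.rpow_one]

lemma eLpNorm_le_eLpNorm_sub_of_condExp_eq_zero [NormedSpace ℝ E]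
    [CompleteSpace E] [IsFiniteMeasure μ] (hm : m ≤ m0) {p : ENNReal} (hp : 1 ≤ p) {x y : Ω → E}
    (hxm : StronglyMeasurable[m] x) (hx : Integrable x μ) (hy : Integrable y μ)
    (hy0 : μ[y | m] =ᵐ[μ] 0) :
    eLpNorm x p μ ≤ eLpNorm (x - y) p μ := by
  have hcond : μ[x - y | m] =ᵐ[μ] x := by
    filter_upwards [condExp_sub hx hy m, hy0] with ω h1 h2
    rw [h1, Pi.sub_apply, h2, condExp_of_stronglyMeasurable hm hxm hx, Pi.zero_apply, sub_zero]
  calc eLpNorm x p μ = eLpNorm μ[x - y | m] p μ := (eLpNorm_congr_ae hcond).symm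
    _ ≤ eLpNorm (x - y) p μ := eLpNorm_condExp_le_eLpNorm _ hp

variable [InnerProductSpace ℝ E]

lemma one_add_rpow_add_one_sub_rpow_le {s t : ℝ} (hs : 0 ≤ s) (ht : |t| ≤ 1) :
    (1 + t) ^ s + (1 - t) ^ s ≤ 2 * (1 + s / 2 * Real.exp (s / 2) * t ^ 2) ^ s := by
  have one_add_rpow_le_exp : ∀ u : ℝ, 0 ≤ 1 + u → (1 + u) ^ s ≤ Real.exp (s * u) := fun u hu ↦ by
    rw [mul_comm s, Real.exp_mul]
    exact Real.rpow_le_rpow hu (by linarith [Real.add_one_le_exp u]) hs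
  have exp_le_one_add : Real.exp (s * t ^ 2 / 2) ≤ 1 + s / 2 * Real.exp (s / 2) * t ^ 2 := by
    have ht2 : t ^ 2 ≤ 1 := (sq_le_one_iff_abs_le_one t).2 ht
    set z := s * t ^ 2 / 2 with hz
    have hz0 : 0 ≤ z := by positivity
    have hzs : z ≤ s / 2 := by rw [hz]; nlinarith
    have h1 : Real.exp z * (1 - z) ≤ 1 := by
      calc Real.exp z * (1 - z) ≤ Real.exp z * Real.exp (-z) := by
            gcongr; linarith [Real.add_one_le_exp (-z)]
        _ = 1 := by rw [← Real.exp_add, add_neg_cancel, Real.exp_zero]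
    calc Real.exp z ≤ 1 + z * Real.exp z := by linarith
      _ ≤ 1 + z * Real.exp (s / 2) := by gcongr
      _ = _ := by rw [hz]; ring
  obtain ⟨ht1, ht2⟩ := abs_le.1 ht
  calc (1 + t) ^ s + (1 - t) ^ s ≤ Real.exp (s * t) + Real.exp (-(s * t)) := by
        have h := one_add_rpow_le_exp (-t) (by linarith)
        rw [mul_neg, ← sub_eq_add_neg] at h
        exact add_le_add (one_add_rpow_le_exp t (by linarith)) h
    _ = 2 * Real.cosh (s * t) := by rw [Real.cosh_eq]; ring
    _ ≤ 2 * Real.exp ((s * t) ^ 2 / 2) := by gcongr; exact Real.cosh_le_exp_half_sq _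
    _ = 2 * Real.exp (s * t ^ 2 / 2) ^ s := by rw [← Real.exp_mul]; ring_nf
    _ ≤ _ := by gcongr

/-- The constant `c` in the two-point inequality
`‖x + y‖ ^ p + ‖x - y‖ ^ p ≤ 2 * (‖x‖ ^ 2 + c * ‖y‖ ^ 2) ^ (p / 2)` for Hilbert spaces. It is not
optimal. -/
noncomputable def twoPointConst (p : ℝ) : ℝ := 1 + p * Real.exp (p / 4)

lemma twoPointConst_nonneg {p : ℝ} (hp : 0 ≤ p) : 0 ≤ twoPointConst p := by
  unfold twoPointConst; positivity

lemma exists_norm_add_sq_eq_mul_one_add (x y : E) : ∃ t : ℝ, |t| ≤ 1 ∧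
    ‖x + y‖ ^ 2 = (‖x‖ ^ 2 + ‖y‖ ^ 2) * (1 + t) ∧
    ‖x - y‖ ^ 2 = (‖x‖ ^ 2 + ‖y‖ ^ 2) * (1 - t) ∧
    (‖x‖ ^ 2 + ‖y‖ ^ 2) * t ^ 2 ≤ 4 * ‖y‖ ^ 2 := by
  rcases eq_or_ne (‖x‖ ^ 2 + ‖y‖ ^ 2) 0 with hS | hS
  · have hx : x = 0 := by
      rw [← norm_eq_zero, ← sq_eq_zero_iff]; linarith [sq_nonneg ‖x‖, sq_nonneg ‖y‖]
    have hy : y = 0 := by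
      rw [← norm_eq_zero, ← sq_eq_zero_iff]; linarith [sq_nonneg ‖x‖, sq_nonneg ‖y‖]
    exact ⟨0, by simp [hx, hy]⟩
  set S := ‖x‖ ^ 2 + ‖y‖ ^ 2 with hSdef
  have hS0 : 0 < S := lt_of_le_of_ne (by positivity) hS.symm
  have hinner : |inner ℝ x y| ≤ ‖x‖ * ‖y‖ := abs_real_inner_le_norm x y
  refine ⟨2 * inner ℝ x y / S, ?_, ?_, ?_, ?_⟩
  · rw [abs_div, abs_mul, abs_two, abs_of_pos hS0, div_le_one hS0]
    nlinarith [sq_nonneg (‖x‖ - ‖y‖)]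
  · rw [norm_add_sq_real]; field_simp; rw [hSdef]; ring
  · rw [norm_sub_sq_real]; field_simp; rw [hSdef]; ring
  · have h : S * (2 * inner ℝ x y / S) ^ 2 = 4 * |inner ℝ x y| ^ 2 / S := by
      rw [sq_abs]; field_simp; ring
    rw [h, div_le_iff₀ hS0]
    nlinarith [pow_le_pow_left₀ (abs_nonneg _) hinner 2, sq_nonneg (‖y‖ ^ 2)]

lemma norm_add_rpow_add_norm_sub_rpow_le {p : ℝ} (hp : 0 ≤ p) (x y : E) :
    ‖x + y‖ ^ p + ‖x - y‖ ^ p ≤ 2 * (‖x‖ ^ 2 + twoPointConst p * ‖y‖ ^ 2) ^ (p / 2) := by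
  obtain ⟨t, ht, hadd, hsub, hSt⟩ := exists_norm_add_sq_eq_mul_one_add x y
  obtain ⟨htl, htu⟩ := abs_le.1 ht
  set S := ‖x‖ ^ 2 + ‖y‖ ^ 2 with hS
  have hS0 : 0 ≤ S := by positivity
  have rpow_eq : ∀ z : E, ∀ u, 0 ≤ u → ‖z‖ ^ 2 = S * u → ‖z‖ ^ p = S ^ (p / 2) * u ^ (p / 2) :=
    fun z u hu hz ↦ by
      rw [← Real.mul_rpow hS0 hu, ← hz, ← Real.rpow_natCast_mul (norm_nonneg z)]
      congr 1; push_cast; ring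
  rw [rpow_eq _ _ (by linarith) hadd, rpow_eq _ _ (by linarith) hsub, ← mul_add]
  calc S ^ (p / 2) * ((1 + t) ^ (p / 2) + (1 - t) ^ (p / 2))
      ≤ S ^ (p / 2) * (2 * (1 + p / 2 / 2 * Real.exp (p / 2 / 2) * t ^ 2) ^ (p / 2)) := by
        gcongr; exact one_add_rpow_add_one_sub_rpow_le (by positivity) ht
    _ = 2 * (S + p / 4 * Real.exp (p / 4) * (S * t ^ 2)) ^ (p / 2) := by
        rw [mul_left_comm, ← Real.mul_rpow hS0 (by positivity)]; ring_nf
    _ ≤ 2 * (S + p / 4 * Real.exp (p / 4) * (4 * ‖y‖ ^ 2)) ^ (p / 2) := by gcongr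
    _ = _ := by rw [hS, twoPointConst]; ring_nf

lemma enorm_add_rpow_add_enorm_sub_rpow_le {p : ℝ} (hp : 0 ≤ p) (x y : E) :
    ‖x + y‖ₑ ^ p + ‖x - y‖ₑ ^ p ≤
      2 * (‖x‖ₑ ^ 2 + ENNReal.ofReal (twoPointConst p) * ‖y‖ₑ ^ 2) ^ (p / 2) := by
  have hc := twoPointConst_nonneg hp
  have h := ENNReal.ofReal_le_ofReal (norm_add_rpow_add_norm_sub_rpow_le hp x y)
  simp only [← ofReal_norm]
  rw [ENNReal.ofReal_add (by positivity) (by positivity), ENNReal.ofReal_mul zero_le_two,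
    ← ENNReal.ofReal_rpow_of_nonneg (by positivity) (by positivity : 0 ≤ p / 2),
    ← ENNReal.ofReal_rpow_of_nonneg (norm_nonneg _) hp,
    ← ENNReal.ofReal_rpow_of_nonneg (norm_nonneg _) hp,
    ENNReal.ofReal_add (by positivity) (by positivity), ENNReal.ofReal_mul hc] at h
  simpa only [ENNReal.ofReal_ofNat, ENNReal.rpow_ofNat, ENNReal.ofReal_pow (norm_nonneg _)] using h

/-- The martingale type 2 constant of `L^p` obtained from `twoPointConst`. -/
noncomputable def martingaleTypeConst (p : ℝ) : NNReal := 2 * (twoPointConst p).toNNReal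

lemma two_mul_add_rpow_le {s : ℝ} (hs : 1 ≤ s) (a d : ENNReal) :
    2 * (a + d) ^ s ≤ (a + 2 * d) ^ s + a ^ s := by
  have mean : a + d = 2⁻¹ * (a + 2 * d) + 2⁻¹ * a := by
    rw [mul_add, ← mul_assoc 2⁻¹ 2, ENNReal.inv_mul_cancel two_ne_zero ENNReal.ofNat_ne_top,
      one_mul, add_right_comm, ← add_mul, ENNReal.inv_two_add_inv_two, one_mul]
  have h := ENNReal.rpow_arith_mean_le_arith_mean2_rpow 2⁻¹ 2⁻¹ (a + 2 * d) a
    ENNReal.inv_two_add_inv_two hs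
  rw [← mean, ← mul_add] at h
  calc 2 * (a + d) ^ s ≤ 2 * (2⁻¹ * ((a + 2 * d) ^ s + a ^ s)) := by gcongr
    _ = _ := by
      rw [← mul_assoc, ENNReal.mul_inv_cancel two_ne_zero ENNReal.ofNat_ne_top, one_mul]

lemma eLpNorm_add_rpow_add_rpow_le_of_condExp_eq_zero [CompleteSpace E] [IsFiniteMeasure μ]
    (hm : m ≤ m0) {p : ℝ} (hp : 2 ≤ p) {x y : Ω → E} (hxm : StronglyMeasurable[m] x)
    (hx : MemLp x (ENNReal.ofReal p) μ) (hy : MemLp y (ENNReal.ofReal p) μ)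
    (hy0 : μ[y | m] =ᵐ[μ] 0) :
    eLpNorm (x + y) (ENNReal.ofReal p) μ ^ p + eLpNorm x (ENNReal.ofReal p) μ ^ p ≤
      2 * (eLpNorm x (ENNReal.ofReal p) μ ^ 2 + ENNReal.ofReal (twoPointConst p) *
        eLpNorm y (ENNReal.ofReal p) μ ^ 2) ^ (p / 2) := by
  have hp0 : 0 < p := by linarith
  have h1p : 1 ≤ ENNReal.ofReal p := by rw [ENNReal.one_le_ofReal]; linarith
  calc eLpNorm (x + y) (ENNReal.ofReal p) μ ^ p + eLpNorm x (ENNReal.ofReal p) μ ^ p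
      ≤ eLpNorm (x + y) (ENNReal.ofReal p) μ ^ p +
          eLpNorm (x - y) (ENNReal.ofReal p) μ ^ p := by
        gcongr
        exact eLpNorm_le_eLpNorm_sub_of_condExp_eq_zero hm h1p hxm (hx.integrable h1p)
          (hy.integrable h1p) hy0
    _ = ∫⁻ ω, (‖x ω + y ω‖ₑ ^ p + ‖x ω - y ω‖ₑ ^ p) ∂μ := by
        rw [← lintegral_enorm_rpow_eq_eLpNorm_rpow hp0, ← lintegral_enorm_rpow_eq_eLpNorm_rpow hp0,
          ← lintegral_add_left' ((hx.1.add hy.1).enorm.pow_const p)]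
        rfl
    _ ≤ ∫⁻ ω, 2 * (‖x ω‖ₑ ^ 2 + ENNReal.ofReal (twoPointConst p) * ‖y ω‖ₑ ^ 2) ^ (p / 2) ∂μ :=
        lintegral_mono fun ω ↦ enorm_add_rpow_add_enorm_sub_rpow_le hp0.le _ _
    _ ≤ _ := by
        rw [lintegral_const_mul' _ _ ENNReal.ofNat_ne_top]
        gcongr
        exact lintegral_sq_add_mul_sq_rpow_le hp hx.1 hy.1 _

lemma eLpNorm_add_sq_le_of_condExp_eq_zero [CompleteSpace E] [IsFiniteMeasure μ] (hm : m ≤ m0)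
    {p : ℝ} (hp : 2 ≤ p) {x y : Ω → E} (hxm : StronglyMeasurable[m] x)
    (hx : MemLp x (ENNReal.ofReal p) μ) (hy : MemLp y (ENNReal.ofReal p) μ)
    (hy0 : μ[y | m] =ᵐ[μ] 0) :
    eLpNorm (x + y) (ENNReal.ofReal p) μ ^ 2 ≤ eLpNorm x (ENNReal.ofReal p) μ ^ 2 +
      martingaleTypeConst p * eLpNorm y (ENNReal.ofReal p) μ ^ 2 := by
  have hp0 : 0 < p := by linarith
  have sq_rpow : ∀ z : ENNReal, (z ^ 2) ^ (p / 2) = z ^ p := fun z ↦ by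
    rw [← ENNReal.rpow_two, ← ENNReal.rpow_mul]; congr 1; ring
  have h := (eLpNorm_add_rpow_add_rpow_le_of_condExp_eq_zero hm hp hxm hx hy hy0).trans
    (two_mul_add_rpow_le (by linarith) _ _)
  rw [sq_rpow, ← mul_assoc] at h
  refine (ENNReal.rpow_le_rpow_iff (half_pos hp0)).1 ?_
  rw [sq_rpow, martingaleTypeConst, ENNReal.coe_mul, ENNReal.coe_ofNat, ENNReal.ofNNReal_toNNReal]
  exact (ENNReal.add_le_add_iff_right (ENNReal.rpow_ne_top_of_nonneg hp0.le hx.2.ne)).1 h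

theorem eLpNorm_sum_sq_le_of_condExp_eq_zero [CompleteSpace E] [IsFiniteMeasure μ]
    {ℱ : Filtration ℕ m0} {p : ℝ} (hp : 2 ≤ p) {y : ℕ → Ω → E}
    (hym : ∀ k, StronglyMeasurable[ℱ (k + 1)] (y k))
    (hy : ∀ k, MemLp (y k) (ENNReal.ofReal p) μ) (hy0 : ∀ k, μ[y k | ℱ k] =ᵐ[μ] 0) (n : ℕ) :
    eLpNorm (∑ k ∈ Finset.range n, y k) (ENNReal.ofReal p) μ ^ 2 ≤
      martingaleTypeConst p *
        ∑ k ∈ Finset.range n, eLpNorm (y k) (ENNReal.ofReal p) μ ^ 2 := by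
  induction n with
  | zero => simp
  | succ n ih =>
    have hsm : StronglyMeasurable[ℱ n] (∑ k ∈ Finset.range n, y k) :=
      Finset.stronglyMeasurable_sum _ fun k hk ↦ (hym k).mono (ℱ.mono (Finset.mem_range.1 hk))
    rw [Finset.sum_range_succ, Finset.sum_range_succ, mul_add]
    exact (eLpNorm_add_sq_le_of_condExp_eq_zero (ℱ.le n) hp hsm
      (memLp_finsetSum' _ fun k _ ↦ hy k) (hy n) (hy0 n)).trans (by gcongr)

end MartingaleTypeTwo

section UniformIntegrability

variable {Ω ι E : Type*} [NormedAddCommGroup E] {m0 : MeasurableSpace Ω} {μ : Measure Ω}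

lemma uniformIntegrable_of_forall_exists_approx {p : ENNReal} (hp : 1 ≤ p) {f : ι → Ω → E}
    (hf : ∀ i, AEStronglyMeasurable (f i) μ)
    (happrox : ∀ ε : ℝ, 0 < ε → ∃ g : ι → Ω → E, UniformIntegrable g p μ ∧
      ∀ i, eLpNorm (f i - g i) p μ ≤ ENNReal.ofReal ε) :
    UniformIntegrable f p μ := by
  refine ⟨hf, fun ε hε ↦ ?_, ?_⟩
  · obtain ⟨g, ⟨hgm, hgUI, -⟩, hfg⟩ := happrox (ε / 2) (half_pos hε)
    obtain ⟨δ, hδ, H⟩ := hgUI (half_pos hε)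
    refine ⟨δ, hδ, fun i s hs hμs ↦ ?_⟩
    calc eLpNorm (s.indicator (f i)) p μ
        = eLpNorm (s.indicator (g i) + s.indicator (f i - g i)) p μ := by
          rw [← Set.indicator_add', add_sub_cancel]
      _ ≤ eLpNorm (s.indicator (g i)) p μ + eLpNorm (s.indicator (f i - g i)) p μ :=
          eLpNorm_add_le ((hgm i).indicator hs) (((hf i).sub (hgm i)).indicator hs) hp
      _ ≤ ENNReal.ofReal (ε / 2) + ENNReal.ofReal (ε / 2) :=
          add_le_add (H i s hs hμs) ((eLpNorm_indicator_le _).trans (hfg i))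
      _ = ENNReal.ofReal ε := by
          rw [← ENNReal.ofReal_add (half_pos hε).le (half_pos hε).le, add_halves]
  · obtain ⟨g, ⟨hgm, -, C, hC⟩, hfg⟩ := happrox 1 one_pos
    refine ⟨C + 1, fun i ↦ ?_⟩
    calc eLpNorm (f i) p μ = eLpNorm (g i + (f i - g i)) p μ := by rw [add_sub_cancel]
      _ ≤ eLpNorm (g i) p μ + eLpNorm (f i - g i) p μ :=
          eLpNorm_add_le (hgm i) ((hf i).sub (hgm i)) hp
      _ ≤ C + 1 := add_le_add (hC i) ((hfg i).trans_eq ENNReal.ofReal_one)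

lemma uniformIntegrable_of_eLpNorm_le [IsFiniteMeasure μ] {p q : ENNReal} (hp : p ≠ 0)
    (hpq : p < q) {f : ι → Ω → E} (hf : ∀ i, AEStronglyMeasurable (f i) μ) {B : NNReal}
    (hB : ∀ i, eLpNorm (f i) q μ ≤ B) : UniformIntegrable f p μ := by
  set θ := 1 / p.toReal - 1 / q.toReal with hθ
  have hp0 : 0 < p.toReal := ENNReal.toReal_pos hp hpq.ne_top
  have hθ0 : 0 < θ := by
    rcases eq_or_ne q ⊤ with rfl | hq
    · simpa [hθ] using hp0
    · exact sub_pos.2 (one_div_lt_one_div_of_lt hp0 (ENNReal.toReal_strict_mono hq hpq))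
  have holder : ∀ i (s : Set Ω), MeasurableSet s →
      eLpNorm (s.indicator (f i)) p μ ≤ B * μ s ^ θ := fun i s hs ↦ by
    rw [eLpNorm_indicator_eq_eLpNorm_restrict hs, ← Measure.restrict_apply_univ s]
    exact (eLpNorm_le_eLpNorm_mul_rpow_measure_univ hpq.le (hf i).restrict).trans
      (mul_le_mul_left (((eLpNorm_mono_measure _ Measure.restrict_le_self)).trans (hB i)) _)
  refine ⟨hf, fun ε hε ↦ ?_, ⟨(B * μ Set.univ ^ θ).toNNReal, fun i ↦ ?_⟩⟩
  · have hδ : 0 < ε / (B + 1) := by positivity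
    refine ⟨(ε / (B + 1)) ^ θ⁻¹, by positivity, fun i s hs hμs ↦ (holder i s hs).trans ?_⟩
    calc (B : ENNReal) * μ s ^ θ ≤ B * ENNReal.ofReal ((ε / (B + 1)) ^ θ⁻¹) ^ θ := by gcongr
      _ = ENNReal.ofReal (B * (ε / (B + 1))) := by
          rw [ENNReal.ofReal_rpow_of_nonneg (by positivity) hθ0.le,
            Real.rpow_inv_rpow hδ.le hθ0.ne', ENNReal.ofReal_mul B.coe_nonneg,
            ENNReal.ofReal_coe_nnreal]
      _ ≤ ENNReal.ofReal ε := by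
          gcongr
          rw [mul_div_left_comm]
          exact mul_le_of_le_one_right hε.le ((div_le_one (by positivity)).2 (by linarith))
  · rw [ENNReal.coe_toNNReal (by finiteness), ← Set.indicator_univ (f i)]
    exact holder i _ MeasurableSet.univ

end UniformIntegrability

section Innovations

variable {Ω E F : Type*} [NormedAddCommGroup E] [NormedSpace ℝ E]
  [NormedAddCommGroup F] [NormedSpace ℝ F]
  {m0 : MeasurableSpace Ω} {μ : Measure Ω} {ℱ : Filtration ℕ m0}

/-- The linear combination `∑ k < n, L k (ξ k - E[ξ k | ℱ k])` of the innovations of the process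
`ξ`, with operator coefficients. -/
noncomputable def innovationSum (μ : Measure Ω) (ℱ : Filtration ℕ m0) (L : ℕ → E →L[ℝ] F)
    (ξ : ℕ → Ω → E) (n : ℕ) : Ω → F :=
  ∑ k ∈ Finset.range n, L k ∘ (ξ k - μ[ξ k | ℱ k])

lemma aestronglyMeasurable_innovationSum {ξ : ℕ → Ω → E}
    (hξ : ∀ k, AEStronglyMeasurable (ξ k) μ) (L : ℕ → E →L[ℝ] F) (n : ℕ) :
    AEStronglyMeasurable (innovationSum μ ℱ L ξ n) μ :=
  Finset.aestronglyMeasurable_sum _ fun k _ ↦ (L k).continuous.comp_aestronglyMeasurable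
    ((hξ k).sub (stronglyMeasurable_condExp.mono (ℱ.le k)).aestronglyMeasurable)

lemma innovationSum_add_ae_eq [CompleteSpace E] {ξ η : ℕ → Ω → E} (hξ : ∀ k, Integrable (ξ k) μ)
    (hη : ∀ k, Integrable (η k) μ) (L : ℕ → E →L[ℝ] F) (n : ℕ) :
    innovationSum μ ℱ L (ξ + η) n =ᵐ[μ] innovationSum μ ℱ L ξ n + innovationSum μ ℱ L η n := by
  have h : ∀ᵐ ω ∂μ, ∀ k, μ[ξ k + η k | ℱ k] ω = (μ[ξ k | ℱ k] + μ[η k | ℱ k]) ω :=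
    ae_all_iff.2 fun k ↦ condExp_add (hξ k) (hη k) _
  filter_upwards [h] with ω hω
  simp only [innovationSum, Finset.sum_apply, Pi.add_apply, Function.comp_apply, Pi.sub_apply,
    hω, ← Finset.sum_add_distrib, ← map_add]
  exact Finset.sum_congr rfl fun k _ ↦ by congr 1; abel

lemma innovationSum_sub_indicator_compl_ae_eq [CompleteSpace E] {ξ : ℕ → Ω → E}
    (hξ : ∀ k, Integrable (ξ k) μ) {s : ℕ → Set Ω} (hs : ∀ k, MeasurableSet (s k))
    (L : ℕ → E →L[ℝ] F) (n : ℕ) :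
    innovationSum μ ℱ L ξ n - innovationSum μ ℱ L (fun k ↦ (s k)ᶜ.indicator (ξ k)) n =ᵐ[μ]
      innovationSum μ ℱ L (fun k ↦ (s k).indicator (ξ k)) n := by
  have hadd := innovationSum_add_ae_eq (ℱ := ℱ) (fun k ↦ (hξ k).indicator (hs k))
    (fun k ↦ (hξ k).indicator (hs k).compl) L n
  have hsplit : (fun k ↦ (s k).indicator (ξ k)) + (fun k ↦ (s k)ᶜ.indicator (ξ k)) = ξ :=
    funext fun k ↦ Set.indicator_self_add_compl (s k) (ξ k)
  rw [hsplit] at hadd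
  filter_upwards [hadd] with ω hω
  rw [Pi.sub_apply, hω, Pi.add_apply, add_sub_cancel_right]

variable [CompleteSpace E] {H : Type*} [NormedAddCommGroup H] [InnerProductSpace ℝ H]
  [CompleteSpace H]

lemma condExp_comp_sub_condExp_ae_eq_zero [CompleteSpace F] {m : MeasurableSpace Ω}
    (hm : m ≤ m0) [SigmaFinite (μ.trim hm)] {f : Ω → E} (hf : Integrable f μ) (L : E →L[ℝ] F) :
    μ[L ∘ (f - μ[f | m]) | m] =ᵐ[μ] 0 := by
  have hcentered : μ[f - μ[f | m] | m] =ᵐ[μ] 0 := by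
    filter_upwards [condExp_sub hf integrable_condExp m] with ω hω
    rw [hω, condExp_of_stronglyMeasurable hm stronglyMeasurable_condExp integrable_condExp,
      sub_self]
  filter_upwards [L.comp_condExp_comm (hf.sub integrable_condExp), hcentered] with ω h1 h2
  rw [← h1, Function.comp_apply, h2, Pi.zero_apply, map_zero, Pi.zero_apply]

lemma eLpNorm_innovationSum_le [IsFiniteMeasure μ] {p : ℝ} (hp : 2 ≤ p) {ξ : ℕ → Ω → E}
    (hξm : ∀ k, StronglyMeasurable[ℱ (k + 1)] (ξ k)) {B : NNReal}
    (hξ : ∀ k, eLpNorm (ξ k) (ENNReal.ofReal p) μ ≤ B) {L : ℕ → E →L[ℝ] H} {n : ℕ} {C : NNReal}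
    (hL : ∑ k ∈ Finset.range n, ‖L k‖₊ ^ 2 ≤ C) :
    eLpNorm (innovationSum μ ℱ L ξ n) (ENNReal.ofReal p) μ ≤
      ↑(NNReal.sqrt (martingaleTypeConst p * C) * (2 * B)) := by
  have h1p : 1 ≤ ENNReal.ofReal p := by rw [ENNReal.one_le_ofReal]; linarith
  have hξL : ∀ k, MemLp (ξ k) (ENNReal.ofReal p) μ := fun k ↦
    ⟨((hξm k).mono (ℱ.le _)).aestronglyMeasurable, (hξ k).trans_lt ENNReal.coe_lt_top⟩
  have hdL : ∀ k, MemLp (ξ k - μ[ξ k | ℱ k]) (ENNReal.ofReal p) μ := fun k ↦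
    (hξL k).sub ((hξL k).condExp h1p)
  have hd : ∀ k, eLpNorm (ξ k - μ[ξ k | ℱ k]) (ENNReal.ofReal p) μ ≤ 2 * B := fun k ↦ by
    refine (eLpNorm_sub_le (hξL k).1 ((hξL k).condExp h1p).1 h1p).trans ?_
    rw [two_mul]
    exact add_le_add (hξ k) ((eLpNorm_condExp_le_eLpNorm _ h1p).trans (hξ k))
  have hterm : ∀ k, eLpNorm (L k ∘ (ξ k - μ[ξ k | ℱ k])) (ENNReal.ofReal p) μ ≤
      ‖L k‖₊ * (2 * B) := fun k ↦
    (eLpNorm_le_nnreal_smul_eLpNorm_of_ae_le_mul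
      (.of_forall fun ω ↦ (L k).le_opNNNorm _) _).trans (mul_le_mul_right (hd k) _)
  have hcond : ∀ k, μ[L k ∘ (ξ k - μ[ξ k | ℱ k]) | ℱ k] =ᵐ[μ] 0 := fun k ↦
    condExp_comp_sub_condExp_ae_eq_zero (ℱ.le k) ((hξL k).integrable h1p) (L k)
  have key := eLpNorm_sum_sq_le_of_condExp_eq_zero hp
    (fun k ↦ (L k).continuous.comp_stronglyMeasurable
      ((hξm k).sub (stronglyMeasurable_condExp.mono (ℱ.mono k.le_succ))))
    (fun k ↦ (L k).comp_memLp' (hdL k)) hcond n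
  refine (ENNReal.pow_le_pow_left_iff two_ne_zero).1 (key.trans ?_)
  calc (martingaleTypeConst p : ENNReal) *
        ∑ k ∈ Finset.range n, eLpNorm (L k ∘ (ξ k - μ[ξ k | ℱ k])) (ENNReal.ofReal p) μ ^ 2
      ≤ martingaleTypeConst p * ∑ k ∈ Finset.range n, (‖L k‖₊ * (2 * B) : ENNReal) ^ 2 := by
        gcongr with k; exact hterm k
    _ = ((martingaleTypeConst p * (∑ k ∈ Finset.range n, ‖L k‖₊ ^ 2) * (2 * B) ^ 2 : NNReal) :
          ENNReal) := by
        push_cast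
        simp only [mul_pow, ← Finset.sum_mul, mul_assoc]
    _ ≤ (((NNReal.sqrt (martingaleTypeConst p * C) * (2 * B)) ^ 2 : NNReal) : ENNReal) := by
        rw [mul_pow _ (2 * B), NNReal.sq_sqrt]
        gcongr
    _ = _ := ENNReal.coe_pow _ _

lemma uniformIntegrable_innovationSum_of_norm_le [IsFiniteMeasure μ] {p : ℝ} (hp : 2 ≤ p)
    {ξ : ℕ → Ω → E} (hξm : ∀ k, StronglyMeasurable[ℱ (k + 1)] (ξ k)) {M : ℝ}
    (hξ : ∀ k ω, ‖ξ k ω‖ ≤ M) {L : ℕ → ℕ → E →L[ℝ] H} {C : NNReal}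
    (hL : ∀ n, ∑ k ∈ Finset.range n, ‖L n k‖₊ ^ 2 ≤ C) :
    UniformIntegrable (fun n ↦ innovationSum μ ℱ (L n) ξ n) (ENNReal.ofReal p) μ := by
  have hp0 : ENNReal.ofReal p ≠ 0 := by rw [Ne, ENNReal.ofReal_eq_zero]; linarith
  have hp2 : ENNReal.ofReal p < ENNReal.ofReal (2 * p) := by
    rw [ENNReal.ofReal_lt_ofReal_iff] <;> linarith
  have hbound : ∀ k, eLpNorm (ξ k) (ENNReal.ofReal (2 * p)) μ ≤
      (μ Set.univ ^ (ENNReal.ofReal (2 * p)).toReal⁻¹ * ENNReal.ofReal M).toNNReal := fun k ↦ by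
    rw [ENNReal.coe_toNNReal (by finiteness)]
    exact eLpNorm_le_of_ae_bound (.of_forall (hξ k))
  exact uniformIntegrable_of_eLpNorm_le hp0 hp2
    (fun n ↦ aestronglyMeasurable_innovationSum
      (fun k ↦ ((hξm k).mono (ℱ.le _)).aestronglyMeasurable) _ n)
    fun n ↦ eLpNorm_innovationSum_le (by linarith) hξm hbound (hL n)

theorem uniformIntegrable_innovationSum [IsFiniteMeasure μ] {p : ℝ} (hp : 2 ≤ p)
    {ξ : ℕ → Ω → E} (hξm : ∀ k, StronglyMeasurable[ℱ (k + 1)] (ξ k))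
    (hξ : UniformIntegrable ξ (ENNReal.ofReal p) μ) {L : ℕ → ℕ → E →L[ℝ] H} {C : NNReal}
    (hL : ∀ n, ∑ k ∈ Finset.range n, ‖L n k‖₊ ^ 2 ≤ C) :
    UniformIntegrable (fun n ↦ innovationSum μ ℱ (L n) ξ n) (ENNReal.ofReal p) μ := by
  have h1p : 1 ≤ ENNReal.ofReal p := by rw [ENNReal.one_le_ofReal]; linarith
  refine uniformIntegrable_of_forall_exists_approx h1p
    (fun n ↦ aestronglyMeasurable_innovationSum hξ.1 _ n) fun ε hε ↦ ?_
  set K := NNReal.sqrt (martingaleTypeConst p * C) * 2 with hK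
  have hδ : 0 < ε / (K + 1) := by positivity
  obtain ⟨M, hM⟩ := hξ.spec (one_pos.trans_le h1p).ne' ENNReal.ofReal_ne_top hδ
  have hs : ∀ k, MeasurableSet[ℱ (k + 1)] {ω | M ≤ ‖ξ k ω‖₊} := fun k ↦
    measurableSet_le measurable_const (hξm k).nnnorm.measurable
  set large : ℕ → Ω → E := fun k ↦ {ω | M ≤ ‖ξ k ω‖₊}.indicator (ξ k)
  set small : ℕ → Ω → E := fun k ↦ {ω | M ≤ ‖ξ k ω‖₊}ᶜ.indicator (ξ k)
  have hlarge : ∀ k, StronglyMeasurable[ℱ (k + 1)] (large k) := fun k ↦ (hξm k).indicator (hs k)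
  have hsmall : ∀ k, StronglyMeasurable[ℱ (k + 1)] (small k) := fun k ↦
    (hξm k).indicator (hs k).compl
  have hsmall_le : ∀ k ω, ‖small k ω‖ ≤ M := fun k ω ↦ by
    simp only [small]
    by_cases h : ω ∈ {ω | M ≤ ‖ξ k ω‖₊}ᶜ
    · rw [Set.indicator_of_mem h]
      exact (not_le.1 (show ¬M ≤ ‖ξ k ω‖₊ from h)).le
    · rw [Set.indicator_of_notMem h, norm_zero]
      exact M.coe_nonneg
  refine ⟨fun n ↦ innovationSum μ ℱ (L n) small n,
    uniformIntegrable_innovationSum_of_norm_le hp hsmall hsmall_le hL, fun n ↦ ?_⟩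
  rw [eLpNorm_congr_ae (innovationSum_sub_indicator_compl_ae_eq
    (fun k ↦ (hξ.memLp k).integrable h1p) (fun k ↦ ℱ.le _ _ (hs k)) (L n) n)]
  refine (eLpNorm_innovationSum_le hp hlarge hM (hL n)).trans ?_
  rw [← mul_assoc, ← hK, ENNReal.coe_mul, ← ENNReal.ofReal_coe_nnreal,
    ENNReal.ofNNReal_toNNReal, ← ENNReal.ofReal_mul K.coe_nonneg]
  gcongr
  rw [mul_div_left_comm]
  exact mul_le_of_le_one_right hε.le ((div_le_one (by positivity)).2 (by linarith))

end Innovations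

section WeakConvergence

/-- The truncation of a real number to the interval `[-M, M]`. -/
def clamp (M : NNReal) (x : ℝ) : ℝ := max (-M) (min M x)

@[fun_prop]
lemma continuous_clamp (M : NNReal) : Continuous (clamp M) := by
  unfold clamp; fun_prop

lemma abs_clamp_le (M : NNReal) (x : ℝ) : |clamp M x| ≤ M :=
  abs_le.2 ⟨le_max_left _ _, max_le (by linarith [M.coe_nonneg]) (min_le_left _ _)⟩

lemma clamp_eq_self {M : NNReal} {x : ℝ} (h : |x| ≤ M) : clamp M x = x := by
  rw [clamp, min_eq_right (abs_le.1 h).2, max_eq_right (abs_le.1 h).1]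

lemma abs_clamp_le_abs (M : NNReal) (x : ℝ) : |clamp M x| ≤ |x| := by
  rcases le_total |x| M with h | h
  · rw [clamp_eq_self h]
  · exact (abs_clamp_le M x).trans h

lemma abs_sub_clamp_le_abs (M : NNReal) (x : ℝ) : |x - clamp M x| ≤ |x| := by
  have hM := M.coe_nonneg
  unfold clamp
  grind

lemma tendsto_clamp (x : ℝ) : Tendsto (fun M ↦ clamp M x) atTop (nhds x) :=
  tendsto_const_nhds.congr' <| by
    filter_upwards [eventually_ge_atTop ‖x‖₊] with M hM
    exact (clamp_eq_self hM).symm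

/-- `f` composed with the truncation to `[-M, M]`, as a bounded continuous function. -/
def clampBCF {F : Type*} [TopologicalSpace F] (M : NNReal) {f : F → ℝ} (hf : Continuous f) :
    BoundedContinuousFunction F ℝ :=
  .ofNormedAddCommGroup (fun x ↦ clamp M (f x)) (by fun_prop) M fun x ↦ abs_clamp_le M (f x)

variable {Ω ι : Type*} {m0 : MeasurableSpace Ω} {μ : Measure Ω}

lemma integrable_clamp [IsFiniteMeasure μ] {g : Ω → ℝ} (hg : AEStronglyMeasurable g μ)
    (M : NNReal) : Integrable (fun ω ↦ clamp M (g ω)) μ :=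
  .of_bound ((continuous_clamp M).comp_aestronglyMeasurable hg) M
    (.of_forall fun ω ↦ abs_clamp_le M (g ω))

lemma tendstoUniformly_integral_clamp [IsFiniteMeasure μ] {g : ι → Ω → ℝ}
    (hg : UniformIntegrable g 1 μ) :
    TendstoUniformly (fun M i ↦ ∫ ω, clamp M (g i ω) ∂μ) (fun i ↦ ∫ ω, g i ω ∂μ) atTop := by
  refine Metric.tendstoUniformly_iff.2 fun ε hε ↦ ?_
  obtain ⟨C, hC⟩ := hg.spec one_ne_zero ENNReal.one_ne_top (half_pos hε)
  filter_upwards [eventually_ge_atTop C] with M hM i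
  have hi := memLp_one_iff_integrable.1 (hg.memLp i)
  refine lt_of_le_of_lt ?_ (half_lt_self hε)
  rw [Real.dist_eq, ← integral_sub hi (integrable_clamp hi.1 M), ← Real.norm_eq_abs,
    ← ENNReal.ofReal_le_ofReal_iff (half_pos hε).le, ofReal_norm]
  refine (enorm_integral_le_lintegral_enorm _).trans (le_trans ?_ (hC i))
  rw [eLpNorm_one_eq_lintegral_enorm]
  refine lintegral_mono fun ω ↦ ?_
  by_cases h : C ≤ ‖g i ω‖₊
  · rw [Set.indicator_of_mem (s := {x | C ≤ ‖g i x‖₊}) h]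
    exact enorm_le_iff_norm_le.2 (abs_sub_clamp_le_abs M _)
  · have hle : |g i ω| ≤ M := (not_le.1 h).le.trans hM
    rw [clamp_eq_self hle, sub_self, enorm_zero]
    exact zero_le

variable {F : Type*} [TopologicalSpace F] [MeasurableSpace F] [OpensMeasurableSpace F]
  {ν : Measure F} [IsFiniteMeasure ν] {l : Filter ι} {Z : ι → Ω → F} {f : F → ℝ}

lemma integrable_of_tendsto_of_uniformIntegrable [IsFiniteMeasure μ] [l.NeBot] (hf : Continuous f)
    (hUI : UniformIntegrable (fun i ω ↦ f (Z i ω)) 1 μ)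
    (hweak : ∀ g : BoundedContinuousFunction F ℝ,
      Tendsto (fun i ↦ ∫ ω, g (Z i ω) ∂μ) l (nhds (∫ x, g x ∂ν))) :
    Integrable f ν := by
  obtain ⟨C, hC⟩ := hUI.2.2
  have hfm : AEStronglyMeasurable f ν := hf.aestronglyMeasurable
  have hbound : ∀ M : NNReal, eLpNorm (fun x ↦ clamp M (f x)) 1 ν ≤ C := fun M ↦ by
    have hfM := integrable_clamp hfm M
    rw [eLpNorm_one_eq_lintegral_enorm, ← ofReal_integral_norm_eq_lintegral_enorm hfM,
      ENNReal.ofReal_le_iff_le_toReal ENNReal.coe_ne_top]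
    refine le_of_tendsto (hweak (clampBCF M hf).normComp) (.of_forall fun i ↦ ?_)
    have hi := memLp_one_iff_integrable.1 (hUI.memLp i)
    refine (integral_mono (integrable_clamp hi.1 M).abs hi.norm
      fun ω ↦ abs_clamp_le_abs M _).trans ?_
    rw [← ENNReal.ofReal_le_iff_le_toReal ENNReal.coe_ne_top,
      ofReal_integral_norm_eq_lintegral_enorm hi, ← eLpNorm_one_eq_lintegral_enorm]
    exact hC i
  exact memLp_one_iff_integrable.1 ⟨hfm, (Lp.eLpNorm_le_of_ae_tendsto (.of_forall hbound)
    (fun M ↦ (integrable_clamp hfm M).1) (.of_forall fun x ↦ tendsto_clamp (f x))).trans_lt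
      ENNReal.coe_lt_top⟩

theorem tendsto_integral_of_uniformIntegrable [IsFiniteMeasure μ] [l.NeBot] (hf : Continuous f)
    (hUI : UniformIntegrable (fun i ω ↦ f (Z i ω)) 1 μ)
    (hweak : ∀ g : BoundedContinuousFunction F ℝ,
      Tendsto (fun i ↦ ∫ ω, g (Z i ω) ∂μ) l (nhds (∫ x, g x ∂ν))) :
    Tendsto (fun i ↦ ∫ ω, f (Z i ω) ∂μ) l (nhds (∫ x, f x ∂ν)) := by
  have hfi := integrable_of_tendsto_of_uniformIntegrable hf hUI hweak
  refine (tendstoUniformly_integral_clamp hUI).tendsto_of_eventually_tendsto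
    (.of_forall fun M ↦ hweak (clampBCF M hf)) ?_
  exact tendsto_integral_filter_of_dominated_convergence (fun x ↦ |f x|)
    (.of_forall fun M ↦ (integrable_clamp hfi.1 M).1)
    (.of_forall fun M ↦ .of_forall fun x ↦ abs_clamp_le_abs M _) hfi.abs
    (.of_forall fun x ↦ tendsto_clamp _)

lemma eLpNorm_indicator_comp_le_of_abs_le_rpow {G : Type*} [NormedAddCommGroup G] {p : ℝ}
    (hp : 0 < p) {f : G → ℝ} {C : NNReal} (hfC : ∀ x, |f x| ≤ C * (1 + ‖x‖ ^ p)) (Y : Ω → G)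
    {s : Set Ω} (hs : MeasurableSet s) :
    eLpNorm (s.indicator fun ω ↦ f (Y ω)) 1 μ ≤
      C * (μ s + eLpNorm (s.indicator Y) (ENNReal.ofReal p) μ ^ p) := by
  rw [eLpNorm_indicator_eq_eLpNorm_restrict hs, eLpNorm_indicator_eq_eLpNorm_restrict hs,
    eLpNorm_one_eq_lintegral_enorm, ← lintegral_enorm_rpow_eq_eLpNorm_rpow hp,
    ← setLIntegral_one, ← lintegral_add_left measurable_const,
    ← lintegral_const_mul' _ _ ENNReal.coe_ne_top]
  refine lintegral_mono fun ω ↦ ?_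
  have h := ENNReal.ofReal_le_ofReal (hfC (Y ω))
  rwa [ENNReal.ofReal_mul C.coe_nonneg, ENNReal.ofReal_add zero_le_one (by positivity),
    ENNReal.ofReal_one, ← ENNReal.ofReal_rpow_of_nonneg (norm_nonneg _) hp.le, ofReal_norm,
    ENNReal.ofReal_coe_nnreal, ← Real.norm_eq_abs, ofReal_norm] at h

lemma uniformIntegrable_comp_of_abs_le_rpow {G : Type*} [NormedAddCommGroup G] [IsFiniteMeasure μ]
    {p : ℝ} (hp : 0 < p) {Y : ι → Ω → G} (hY : UniformIntegrable Y (ENNReal.ofReal p) μ)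
    {f : G → ℝ} (hf : Continuous f) {C : NNReal} (hfC : ∀ x, |f x| ≤ C * (1 + ‖x‖ ^ p)) :
    UniformIntegrable (fun i ω ↦ f (Y i ω)) 1 μ := by
  have key i {s} := eLpNorm_indicator_comp_le_of_abs_le_rpow (μ := μ) hp hfC (Y i) (s := s)
  refine ⟨fun i ↦ hf.comp_aestronglyMeasurable (hY.1 i), fun ε hε ↦ ?_, ?_⟩
  · set η := ε / (2 * (C + 1)) with hη
    have hη0 : 0 < η := by positivity
    obtain ⟨δ, hδ, hYδ⟩ := hY.2.1 (ε := η ^ p⁻¹) (by positivity)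
    refine ⟨min δ η, lt_min hδ hη0, fun i s hs hμs ↦ (key i hs).trans ?_⟩
    have hYs := hYδ i s hs (hμs.trans (ENNReal.ofReal_le_ofReal (min_le_left _ _)))
    calc C * (μ s + eLpNorm (s.indicator (Y i)) (ENNReal.ofReal p) μ ^ p)
        ≤ C * (ENNReal.ofReal η + ENNReal.ofReal (η ^ p⁻¹) ^ p) := by
          gcongr
          exact hμs.trans (ENNReal.ofReal_le_ofReal (min_le_right _ _))
      _ = ENNReal.ofReal (C * (η + η)) := by
          rw [ENNReal.ofReal_rpow_of_nonneg (by positivity) hp.le,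
            Real.rpow_inv_rpow hη0.le hp.ne', ENNReal.ofReal_mul C.coe_nonneg,
            ENNReal.ofReal_add hη0.le hη0.le, ENNReal.ofReal_coe_nnreal]
      _ ≤ ENNReal.ofReal ε := by
          gcongr
          rw [hη, ← two_mul, ← mul_assoc, mul_div_assoc', div_le_iff₀ (by positivity)]
          nlinarith
  · obtain ⟨B, hB⟩ := hY.2.2
    refine ⟨(C * (μ Set.univ + B ^ p)).toNNReal, fun i ↦ ?_⟩
    have h := key i MeasurableSet.univ
    rw [Set.indicator_univ, Set.indicator_univ] at h
    rw [ENNReal.coe_toNNReal (by finiteness)]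
    exact h.trans (by gcongr; exact hB i)

lemma rpow_le_one_add_rpow {r p t : ℝ} (hr : 0 ≤ r) (hrp : r ≤ p) (ht : 0 ≤ t) :
    t ^ r ≤ 1 + t ^ p := by
  rcases le_total t 1 with h | h
  · linarith [Real.rpow_le_one ht h hr, Real.rpow_nonneg ht p]
  · linarith [Real.rpow_le_rpow_of_exponent_le h hrp]

lemma abs_prod_pow_le_one_add_norm_rpow {κ : Type*} [Fintype κ] {p : ℝ} {α : κ → ℕ}
    (hα : ∑ j, (α j : ℝ) ≤ p) (x : EuclideanSpace ℝ κ) :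
    |∏ j, x j ^ α j| ≤ 1 + ‖x‖ ^ p := by
  calc |∏ j, x j ^ α j| ≤ ∏ j, ‖x‖ ^ α j := by
        rw [Finset.abs_prod]
        refine Finset.prod_le_prod (fun _ _ ↦ abs_nonneg _) fun j _ ↦ ?_
        rw [abs_pow]
        gcongr
        exact PiLp.norm_apply_le x j
    _ = ‖x‖ ^ ∑ j, (α j : ℝ) := by
        rw [Finset.prod_pow_eq_pow_sum, ← Nat.cast_sum, Real.rpow_natCast]
    _ ≤ 1 + ‖x‖ ^ p :=
        rpow_le_one_add_rpow (Finset.sum_nonneg fun _ _ ↦ Nat.cast_nonneg _) hα (norm_nonneg _)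

end WeakConvergence

section Transition

/-- The transition operator `(1 + x_k T) ⋯ (1 + x_{n-1} T)` of the recursion
`u_{j+1} = u_j + x_j T u_j` from time `k` to time `n`. -/
noncomputable def transition {𝕜 𝔸 : Type*} [CommSemiring 𝕜] [Semiring 𝔸] [Algebra 𝕜 𝔸]
    (T : 𝔸) (x : ℕ → 𝕜) (k n : ℕ) : 𝔸 :=
  Polynomial.aeval T (∏ j ∈ Finset.Ico k n, (1 + Polynomial.C (x j) * Polynomial.X))

section Algebra

variable {𝕜 𝔸 : Type*} [CommSemiring 𝕜] [Semiring 𝔸] [Algebra 𝕜 𝔸] (T : 𝔸) (x : ℕ → 𝕜)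

@[simp]
lemma transition_self (k : ℕ) : transition T x k k = 1 := by
  simp [transition]

lemma transition_succ {k n : ℕ} (hkn : k ≤ n) :
    transition T x k (n + 1) = (1 + x n • T) * transition T x k n := by
  rw [transition, Finset.prod_Ico_succ_top hkn, mul_comm, map_mul, ← transition]
  simp [Algebra.smul_def]

lemma commute_transition (k n : ℕ) : Commute (transition T x k n) T := by
  simpa [transition] using
    (Polynomial.commute_X (∏ j ∈ Finset.Ico k n, (1 + Polynomial.C (x j) * Polynomial.X))).symm.map
      (Polynomial.aeval T)

end Algebra

lemma transition_intertwine {E V : Type*} [AddCommGroup E] [TopologicalSpace E]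
    [IsTopologicalAddGroup E] [Module ℝ E] [ContinuousConstSMul ℝ E] [AddCommGroup V] [Module ℂ V]
    {T : E →L[ℝ] E} {S : Module.End ℂ V} {J : E →ₗ[ℝ] V} (hJ : ∀ v, J (T v) = S (J v))
    (x : ℕ → ℝ) {k n : ℕ} (hkn : k ≤ n) (v : E) :
    J (transition T x k n v) = transition S (fun j ↦ (x j : ℂ)) k n (J v) := by
  induction n, hkn using Nat.le_induction with
  | base => simp
  | succ n hkn ih => simp [transition_succ _ _ hkn, ih, hJ]

section Growth

/-- The growth `exp (∑ (x_j Re λ + x_j² |λ|² / 2))` over `k ≤ j < n` of the recursion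
`u_{j+1} = (1 + x_j λ) u_j`. -/
noncomputable def expWeight (lam : ℂ) (x : ℕ → ℝ) (k n : ℕ) : ℝ :=
  Real.exp (∑ j ∈ Finset.Ico k n, (lam.re * x j + ‖lam‖ ^ 2 / 2 * x j ^ 2))

lemma norm_one_add_mul_le_exp (lam : ℂ) (t : ℝ) :
    ‖1 + t * lam‖ ≤ Real.exp (lam.re * t + ‖lam‖ ^ 2 / 2 * t ^ 2) := by
  refine le_of_sq_le_sq ?_ (Real.exp_pos _).le
  calc ‖1 + t * lam‖ ^ 2 = 2 * (lam.re * t + ‖lam‖ ^ 2 / 2 * t ^ 2) + 1 := by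
        rw [← Complex.normSq_eq_norm_sq, ← Complex.normSq_eq_norm_sq lam, Complex.normSq_apply,
          Complex.normSq_apply]
        simp
        ring
    _ ≤ Real.exp (2 * (lam.re * t + ‖lam‖ ^ 2 / 2 * t ^ 2)) := Real.add_one_le_exp _
    _ = Real.exp (lam.re * t + ‖lam‖ ^ 2 / 2 * t ^ 2) ^ 2 := by
        rw [← Real.exp_nat_mul, Nat.cast_ofNat]

variable {lam : ℂ} {x : ℕ → ℝ}

lemma expWeight_succ {k n : ℕ} (hkn : k ≤ n) :
    expWeight lam x k (n + 1) =
      Real.exp (lam.re * x n + ‖lam‖ ^ 2 / 2 * x n ^ 2) * expWeight lam x k n := by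
  rw [expWeight, Finset.sum_Ico_succ_top hkn, add_comm, Real.exp_add, expWeight]

lemma expWeight_le_mul_expWeight_succ {M : ℝ} (hx0 : ∀ j, 0 ≤ x j) (hxM : ∀ j, x j ≤ M) {k n : ℕ}
    (hkn : k ≤ n) :
    expWeight lam x k n ≤ Real.exp (|lam.re| * M) * expWeight lam x k (n + 1) := by
  have hre : -(|lam.re| * M) ≤ lam.re * x n :=
    calc -(|lam.re| * M) ≤ -(|lam.re| * x n) := by gcongr; exact hxM n
      _ = -|lam.re| * x n := by ring
      _ ≤ lam.re * x n := mul_le_mul_of_nonneg_right (neg_abs_le _) (hx0 n)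
  rw [expWeight_succ hkn, ← mul_assoc, ← Real.exp_add]
  refine le_mul_of_one_le_left (Real.exp_pos _).le (Real.one_le_exp ?_)
  have : 0 ≤ ‖lam‖ ^ 2 / 2 * x n ^ 2 := by positivity
  linarith

lemma expWeight_le (hx2 : Summable fun j ↦ x j ^ 2) (k n : ℕ) :
    expWeight lam x k n ≤
      Real.exp (‖lam‖ ^ 2 / 2 * ∑' j, x j ^ 2) * Real.exp (lam.re * ∑ j ∈ Finset.Ico k n, x j) := by
  rw [expWeight, ← Real.exp_add, Finset.sum_add_distrib, ← Finset.mul_sum, ← Finset.mul_sum,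
    add_comm]
  gcongr
  exact hx2.sum_le_tsum _ fun j _ ↦ sq_nonneg _

variable {V : Type*} [NormedAddCommGroup V] [NormedSpace ℂ V] {T : Module.End ℂ V}

lemma transition_succ_apply_eq {k n : ℕ} (hkn : k ≤ n) (v : V) :
    transition T (fun j ↦ (x j : ℂ)) k (n + 1) v =
      (1 + x n * lam) • transition T (fun j ↦ (x j : ℂ)) k n v +
        (x n : ℂ) • transition T (fun j ↦ (x j : ℂ)) k n ((T - algebraMap ℂ _ lam) v) := by
  have hcomm : transition T (fun j ↦ (x j : ℂ)) k n (T v) =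
      T (transition T (fun j ↦ (x j : ℂ)) k n v) :=
    congr($((commute_transition T (fun j ↦ (x j : ℂ)) k n).eq) v)
  simp only [transition_succ _ _ hkn, Module.End.mul_apply, LinearMap.add_apply,
    LinearMap.sub_apply, LinearMap.smul_apply, Module.End.one_apply, Module.algebraMap_end_apply,
    map_sub, map_smul, hcomm]
  module

/-- One step of the induction on the nilpotency order: the component along `T - λ` acts as a
forcing term, which costs one power of `h`. -/
lemma norm_transition_apply_le_of_forcing {M C : ℝ} {m : ℕ} (hx0 : ∀ j, 0 ≤ x j)
    (hxM : ∀ j, x j ≤ M) (hC : 0 ≤ C) {v : V} {k n : ℕ} (hkn : k ≤ n)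
    (hv : ∀ n, k ≤ n →
      ‖transition T (fun j ↦ (x j : ℂ)) k n ((T - algebraMap ℂ _ lam) v)‖ ≤
        C * expWeight lam x k n * (1 + ∑ j ∈ Finset.Ico k n, x j) ^ m) :
    ‖transition T (fun j ↦ (x j : ℂ)) k n v‖ ≤ expWeight lam x k n *
      (‖v‖ + Real.exp (|lam.re| * M) * C * (∑ j ∈ Finset.Ico k n, x j) *
        (1 + ∑ j ∈ Finset.Ico k n, x j) ^ m) := by
  induction n, hkn using Nat.le_induction with
  | base => simp [expWeight]
  | succ n hkn ih =>
    set K := Real.exp (|lam.re| * M)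
    set h := ∑ j ∈ Finset.Ico k n, x j
    have hh : 0 ≤ h := Finset.sum_nonneg fun j _ ↦ hx0 j
    have hE : 0 ≤ expWeight lam x k (n + 1) := (Real.exp_pos _).le
    have hsum : ∑ j ∈ Finset.Ico k (n + 1), x j = h + x n := Finset.sum_Ico_succ_top hkn x
    have hxn := hx0 n
    have hmono : (1 + h) ^ m ≤ (1 + (h + x n)) ^ m := by gcongr; linarith
    have hdiag : ‖(1 + x n * lam) • transition T (fun j ↦ (x j : ℂ)) k n v‖ ≤
        expWeight lam x k (n + 1) * (‖v‖ + K * C * h * (1 + (h + x n)) ^ m) := by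
      rw [norm_smul, expWeight_succ hkn, mul_assoc]
      gcongr
      · exact norm_one_add_mul_le_exp lam (x n)
      · exact ih.trans (by gcongr; exact (Real.exp_pos _).le)
    have hforce : ‖(x n : ℂ) • transition T (fun j ↦ (x j : ℂ)) k n
        ((T - algebraMap ℂ _ lam) v)‖ ≤
        x n * (C * (K * expWeight lam x k (n + 1)) * (1 + (h + x n)) ^ m) := by
      rw [norm_smul, Complex.norm_real, Real.norm_of_nonneg hxn]
      gcongr
      exact (hv n hkn).trans
        (by gcongr; exact expWeight_le_mul_expWeight_succ hx0 hxM hkn)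
    rw [transition_succ_apply_eq (lam := lam) hkn, hsum]
    refine (norm_add_le _ _).trans ((add_le_add hdiag hforce).trans_eq ?_)
    ring

lemma exists_norm_transition_apply_le_expWeight {M : ℝ} (hx0 : ∀ j, 0 ≤ x j) (hxM : ∀ j, x j ≤ M)
    (m : ℕ) {v : V} (hv : ((T - algebraMap ℂ _ lam) ^ (m + 1)) v = 0) :
    ∃ C, 0 ≤ C ∧ ∀ k n, k ≤ n → ‖transition T (fun j ↦ (x j : ℂ)) k n v‖ ≤
      C * expWeight lam x k n * (1 + ∑ j ∈ Finset.Ico k n, x j) ^ m := by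
  induction m generalizing v with
  | zero =>
    refine ⟨‖v‖, norm_nonneg v, fun k n hkn ↦ ?_⟩
    have hv' : (T - algebraMap ℂ _ lam) v = 0 := by simpa using hv
    have := norm_transition_apply_le_of_forcing (T := T) (lam := lam) (C := 0) (m := 0) hx0 hxM
      le_rfl hkn (v := v) fun n _ ↦ by simp [hv']
    simpa [mul_comm] using this
  | succ m ih =>
    obtain ⟨C, hC, hbound⟩ := ih (v := (T - algebraMap ℂ _ lam) v) (by rwa [pow_succ] at hv)
    refine ⟨‖v‖ + Real.exp (|lam.re| * M) * C, by positivity, fun k n hkn ↦ ?_⟩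
    refine (norm_transition_apply_le_of_forcing hx0 hxM hC hkn (hbound k)).trans ?_
    set h := ∑ j ∈ Finset.Ico k n, x j
    have hh : 0 ≤ h := Finset.sum_nonneg fun j _ ↦ hx0 j
    have hpoly : ‖v‖ + Real.exp (|lam.re| * M) * C * h * (1 + h) ^ m ≤
        (‖v‖ + Real.exp (|lam.re| * M) * C) * (1 + h) ^ (m + 1) := by
      rw [add_mul]
      refine add_le_add (le_mul_of_one_le_right (norm_nonneg v) (one_le_pow₀ (by linarith))) ?_
      rw [pow_succ', ← mul_assoc]
      gcongr
      linarith
    refine (mul_le_mul_of_nonneg_left hpoly (Real.exp_pos _).le).trans_eq ?_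
    rw [expWeight]
    ring

lemma exists_norm_transition_apply_le {M : ℝ} (hx0 : ∀ j, 0 ≤ x j) (hxM : ∀ j, x j ≤ M)
    (hx2 : Summable fun j ↦ x j ^ 2) {m : ℕ} {v : V}
    (hv : ((T - algebraMap ℂ _ lam) ^ (m + 1)) v = 0) :
    ∃ C, 0 ≤ C ∧ ∀ k n, k ≤ n → ‖transition T (fun j ↦ (x j : ℂ)) k n v‖ ≤
      C * Real.exp (lam.re * ∑ j ∈ Finset.Ico k n, x j) *
        (1 + ∑ j ∈ Finset.Ico k n, x j) ^ m := by
  obtain ⟨C, hC, hbound⟩ := exists_norm_transition_apply_le_expWeight hx0 hxM m hv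
  refine ⟨C * Real.exp (‖lam‖ ^ 2 / 2 * ∑' j, x j ^ 2), by positivity, fun k n hkn ↦ ?_⟩
  have hh : 0 ≤ ∑ j ∈ Finset.Ico k n, x j := Finset.sum_nonneg fun j _ ↦ hx0 j
  refine (hbound k n hkn).trans ?_
  rw [mul_assoc C (Real.exp _)]
  gcongr
  exact expWeight_le hx2 k n

end Growth

end Transition

section StepSizes

lemma exp_le_one_add_mul_exp_sq {y : ℝ} (hy : 0 ≤ y) :
    Real.exp y ≤ (1 + y) * Real.exp (y ^ 2) := by
  have hinv : 1 ≤ (1 + y) * Real.exp (y ^ 2 - y) :=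
    calc (1 : ℝ) ≤ (1 + y) * (y ^ 2 - y + 1) := by nlinarith [pow_nonneg hy 3]
      _ ≤ (1 + y) * Real.exp (y ^ 2 - y) := by gcongr; exact Real.add_one_le_exp _
  calc Real.exp y ≤ (1 + y) * Real.exp (y ^ 2 - y) * Real.exp y :=
        le_mul_of_one_le_left (Real.exp_pos y).le hinv
    _ = (1 + y) * Real.exp (y ^ 2) := by rw [mul_assoc, ← Real.exp_add, sub_add_cancel]

lemma exists_one_add_pow_le_mul_exp (N : ℕ) {δ : ℝ} (hδ : 0 < δ) :
    ∃ C, 0 ≤ C ∧ ∀ h : ℝ, 0 ≤ h → (1 + h) ^ N ≤ C * Real.exp (δ * h) := by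
  refine ⟨N.factorial * Real.exp δ / δ ^ N, by positivity, fun h hh ↦ ?_⟩
  have hexp := Real.pow_div_factorial_le_exp (δ * (1 + h)) (by positivity) N
  rw [div_le_iff₀ (by positivity), mul_pow, mul_one_add, Real.exp_add] at hexp
  rw [div_mul_eq_mul_div, le_div_iff₀ (by positivity)]
  linarith

/-- A Riemann sum for `∫₀^∞ exp (-δ h) dh`. -/
lemma sum_mul_exp_neg_le {x : ℕ → ℝ} {M δ : ℝ} (hx0 : ∀ j, 0 ≤ x j) (hxM : ∀ j, x j ≤ M)
    (hδ : 0 < δ) (n : ℕ) :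
    ∑ k ∈ Finset.range n, x k * Real.exp (-(δ * ∑ j ∈ Finset.Ico (k + 1) n, x j)) ≤
      Real.exp (δ * M) / δ := by
  induction n with
  | zero => simp only [Finset.range_zero, Finset.sum_empty]; positivity
  | succ n ih =>
    have hdecay : ∀ k ∈ Finset.range n,
        x k * Real.exp (-(δ * ∑ j ∈ Finset.Ico (k + 1) (n + 1), x j)) =
          x k * Real.exp (-(δ * ∑ j ∈ Finset.Ico (k + 1) n, x j)) * Real.exp (-(δ * x n)) :=
      fun k hk ↦ by
        rw [Finset.sum_Ico_succ_top (Finset.mem_range.1 hk), mul_assoc, ← Real.exp_add]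
        congr 2
        ring
    have hstep : Real.exp (-(δ * x n)) * (1 + δ * x n) ≤ 1 := by
      rw [Real.exp_neg, inv_mul_le_one₀ (Real.exp_pos _), add_comm]
      exact Real.add_one_le_exp _
    have hM : 1 ≤ Real.exp (-(δ * x n)) * Real.exp (δ * M) := by
      rw [← Real.exp_add]
      exact Real.one_le_exp (by nlinarith [hxM n])
    rw [Finset.sum_range_succ, Finset.sum_congr rfl hdecay, ← Finset.sum_mul, Finset.Ico_self,
      Finset.sum_empty, mul_zero, neg_zero, Real.exp_zero, mul_one]
    have hδx : 0 ≤ δ * x n := mul_nonneg hδ.le (hx0 n)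
    calc _ ≤ Real.exp (δ * M) / δ * Real.exp (-(δ * x n)) + x n := by gcongr
      _ ≤ Real.exp (δ * M) / δ := by
        rw [div_mul_eq_mul_div, div_add' _ _ _ hδ.ne']
        gcongr
        nlinarith [Real.exp_pos (δ * M)]

/-- The step size `1 / w_n`, where `w_n = w₀ + n b` is the total activity at time `n`. -/
noncomputable def urnStep (w₀ b : ℝ) (n : ℕ) : ℝ := (w₀ + n * b)⁻¹

variable {w₀ b : ℝ}

lemma urnStep_nonneg (hw₀ : 0 < w₀) (hb : 0 < b) (n : ℕ) : 0 ≤ urnStep w₀ b n := by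
  unfold urnStep; positivity

lemma urnStep_antitone (hw₀ : 0 < w₀) (hb : 0 < b) : Antitone (urnStep w₀ b) := fun k n hkn ↦ by
  unfold urnStep; gcongr

lemma urnStep_le_inv (hw₀ : 0 < w₀) (hb : 0 < b) (n : ℕ) : urnStep w₀ b n ≤ w₀⁻¹ := by
  simpa [urnStep] using urnStep_antitone hw₀ hb n.zero_le

lemma urnStep_le_mul_inv_succ (hw₀ : 0 < w₀) (hb : 0 < b) (n : ℕ) :
    urnStep w₀ b n ≤ (min w₀ b)⁻¹ * ((n + 1 : ℕ) : ℝ)⁻¹ := by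
  have hmin : 0 < min w₀ b := lt_min hw₀ hb
  rw [urnStep, ← mul_inv]
  gcongr
  calc min w₀ b * ((n + 1 : ℕ) : ℝ) = min w₀ b + n * min w₀ b := by push_cast; ring
    _ ≤ w₀ + n * b := by gcongr; exacts [min_le_left _ _, min_le_right _ _]

lemma summable_urnStep_sq (hw₀ : 0 < w₀) (hb : 0 < b) :
    Summable fun n ↦ urnStep w₀ b n ^ 2 := by
  have hsq : Summable fun n : ℕ ↦ (((n + 1 : ℕ) : ℝ) ^ 2)⁻¹ :=
    (summable_nat_add_iff 1).2 (Real.summable_nat_pow_inv.2 one_lt_two)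
  refine .of_nonneg_of_le (fun n ↦ sq_nonneg _) (fun n ↦ ?_) (hsq.mul_left ((min w₀ b)⁻¹ ^ 2))
  rw [← inv_pow, ← mul_pow]
  gcongr
  exacts [urnStep_nonneg hw₀ hb n, urnStep_le_mul_inv_succ hw₀ hb n]

lemma sum_urnStep_le_log (hw₀ : 0 < w₀) (hb : 0 < b) (n : ℕ) :
    ∑ k ∈ Finset.range n, urnStep w₀ b k ≤ (min w₀ b)⁻¹ * (1 + Real.log n) := by
  have hmin : 0 < min w₀ b := lt_min hw₀ hb
  calc ∑ k ∈ Finset.range n, urnStep w₀ b k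
      ≤ ∑ k ∈ Finset.range n, (min w₀ b)⁻¹ * ((k + 1 : ℕ) : ℝ)⁻¹ :=
        Finset.sum_le_sum fun k _ ↦ urnStep_le_mul_inv_succ hw₀ hb k
    _ = (min w₀ b)⁻¹ * harmonic n := by rw [← Finset.mul_sum, harmonic]; push_cast; rfl
    _ ≤ (min w₀ b)⁻¹ * (1 + Real.log n) := by gcongr; exact harmonic_le_one_add_log n

/-- The product of the factors `1 + b / w_j = w_{j+1} / w_j` telescopes. -/
lemma exists_exp_mul_sum_urnStep_le (hw₀ : 0 < w₀) (hb : 0 < b) :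
    ∃ C, 0 ≤ C ∧ ∀ k n, k ≤ n → Real.exp (b * ∑ j ∈ Finset.Ico k n, urnStep w₀ b j) ≤
      C * ((w₀ + n * b) * urnStep w₀ b k) := by
  have hstep := urnStep_nonneg hw₀ hb
  have hsq := summable_urnStep_sq hw₀ hb
  refine ⟨Real.exp (b ^ 2 * ∑' j, urnStep w₀ b j ^ 2), (Real.exp_pos _).le, fun k n hkn ↦ ?_⟩
  have htele : Real.exp (b * ∑ j ∈ Finset.Ico k n, urnStep w₀ b j) ≤
      Real.exp (b ^ 2 * ∑ j ∈ Finset.Ico k n, urnStep w₀ b j ^ 2) *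
        ((w₀ + n * b) * urnStep w₀ b k) := by
    induction n, hkn using Nat.le_induction with
    | base =>
      have : w₀ + k * b ≠ 0 := by positivity
      simp [urnStep, this]
    | succ n hkn ih =>
      have hratio : (1 + b * urnStep w₀ b n) * (w₀ + n * b) = w₀ + (n + 1 : ℕ) * b := by
        have : w₀ + n * b ≠ 0 := by positivity
        rw [urnStep]
        push_cast
        field_simp
        ring
      rw [Finset.sum_Ico_succ_top hkn, Finset.sum_Ico_succ_top hkn, mul_add, mul_add, Real.exp_add,
        Real.exp_add, ← mul_pow, ← hratio]
      refine (mul_le_mul ih (exp_le_one_add_mul_exp_sq (mul_nonneg hb.le (hstep n)))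
        (Real.exp_pos _).le ?_).trans_eq (by ring)
      have := hstep k
      positivity
  refine htele.trans ?_
  have := hstep k
  gcongr
  exact hsq.sum_le_tsum _ fun j _ ↦ sq_nonneg _

end StepSizes

section VarianceGrowth

variable {V : Type*} [NormedAddCommGroup V] [NormedSpace ℂ V] (T : Module.End ℂ V)

/-- The vectors `v` along which the variance proxy `∑_{k<n} ‖Φ_{k+1,n} v‖²` is `O(s_n)`, where
`Φ` is the transition operator of the recursion `u_{j+1} = u_j + x_j T u_j`. -/
def varianceGrowthSubmodule (x s : ℕ → ℝ) : Submodule ℂ V where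
  carrier := {v | (fun n ↦ ∑ k ∈ Finset.range n,
    ‖transition T (fun j ↦ (x j : ℂ)) (k + 1) n v‖ ^ 2) =O[atTop] s}
  zero_mem' := by simpa using Asymptotics.isBigO_zero s atTop
  add_mem' {v w} hv hw := by
    refine (Asymptotics.IsBigO.of_norm_le fun n ↦ ?_).trans
      ((Asymptotics.IsBigO.add hv hw).const_mul_left 2)
    rw [Real.norm_of_nonneg (by positivity), ← Finset.sum_add_distrib, Finset.mul_sum]
    refine Finset.sum_le_sum fun k _ ↦ ?_
    rw [map_add]
    exact (pow_le_pow_left₀ (norm_nonneg _) (norm_add_le _ _) 2).trans add_sq_le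
  smul_mem' c v hv := by
    refine (Asymptotics.IsBigO.const_mul_left hv (‖c‖ ^ 2)).congr_left fun n ↦ ?_
    simp only [Finset.mul_sum, map_smul, norm_smul, mul_pow]

variable {T} {w₀ b : ℝ} {lam : ℂ} {m : ℕ} {v : V}

lemma exists_norm_transition_apply_sq_le (hw₀ : 0 < w₀) (hb : 0 < b)
    (hv : ((T - algebraMap ℂ _ lam) ^ (m + 1)) v = 0) :
    ∃ C, 0 ≤ C ∧ ∀ k n, k < n →
      ‖transition T (fun j ↦ (urnStep w₀ b j : ℂ)) (k + 1) n v‖ ^ 2 ≤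
        C * (w₀ + n * b) * (urnStep w₀ b k *
          (Real.exp (-((b - 2 * lam.re) * ∑ j ∈ Finset.Ico (k + 1) n, urnStep w₀ b j)) *
            (1 + ∑ j ∈ Finset.Ico (k + 1) n, urnStep w₀ b j) ^ (2 * m))) := by
  obtain ⟨C, hC, hgrowth⟩ := exists_norm_transition_apply_le (urnStep_nonneg hw₀ hb)
    (urnStep_le_inv hw₀ hb) (summable_urnStep_sq hw₀ hb) hv
  obtain ⟨D, hD, htele⟩ := exists_exp_mul_sum_urnStep_le hw₀ hb
  refine ⟨C ^ 2 * D, by positivity, fun k n hkn ↦ ?_⟩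
  set h := ∑ j ∈ Finset.Ico (k + 1) n, urnStep w₀ b j
  have hh : 0 ≤ h := Finset.sum_nonneg fun j _ ↦ urnStep_nonneg hw₀ hb j
  calc ‖transition T (fun j ↦ (urnStep w₀ b j : ℂ)) (k + 1) n v‖ ^ 2
      ≤ (C * Real.exp (lam.re * h) * (1 + h) ^ m) ^ 2 := by gcongr; exact hgrowth _ _ hkn
    _ = C ^ 2 * Real.exp (b * h) * (Real.exp (-((b - 2 * lam.re) * h)) * (1 + h) ^ (2 * m)) := by
      have hexp : Real.exp (lam.re * h) ^ 2 =
          Real.exp (b * h) * Real.exp (-((b - 2 * lam.re) * h)) := by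
        rw [← Real.exp_nat_mul, ← Real.exp_add]
        congr 1
        push_cast
        ring
      rw [mul_pow, mul_pow, hexp, ← pow_mul, mul_comm m]
      ring
    _ ≤ C ^ 2 * (D * ((w₀ + n * b) * urnStep w₀ b k)) *
        (Real.exp (-((b - 2 * lam.re) * h)) * (1 + h) ^ (2 * m)) := by
      gcongr
      exact (htele _ _ hkn).trans (by gcongr; exact urnStep_antitone hw₀ hb k.le_succ)
    _ = _ := by ring

lemma isBigO_const_of_tendsto_atTop {g : ℕ → ℝ} (hg : Tendsto g atTop atTop) (c : ℝ) :
    (fun _ ↦ c) =O[atTop] g :=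
  (Asymptotics.isLittleO_const_left.2 (.inr (tendsto_norm_atTop_atTop.comp hg))).isBigO

lemma isBigO_of_forall_le_mul_activity {f g : ℕ → ℝ} {C : ℝ} (hf : ∀ n, 0 ≤ f n)
    (hfg : ∀ n, f n ≤ C * (w₀ + n * b) * g n) :
    f =O[atTop] fun n : ℕ ↦ n * g n := by
  have hact : (fun n : ℕ ↦ w₀ + n * b) =O[atTop] fun n : ℕ ↦ (n : ℝ) := by
    refine (isBigO_const_of_tendsto_atTop tendsto_natCast_atTop_atTop w₀).add ?_
    simpa only [mul_comm b] using Asymptotics.isBigO_const_mul_self b (fun n : ℕ ↦ (n : ℝ)) atTop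
  refine (Asymptotics.IsBigO.of_norm_le (g := fun n : ℕ ↦ C * (w₀ + n * b) * g n) fun n ↦ ?_).trans
    ((hact.const_mul_left C).mul (Asymptotics.isBigO_refl g atTop))
  rw [Real.norm_of_nonneg (hf n)]
  exact hfg n

lemma mem_varianceGrowthSubmodule_of_re_lt (hw₀ : 0 < w₀) (hb : 0 < b) (hlam : lam.re < b / 2)
    (hv : ((T - algebraMap ℂ _ lam) ^ (m + 1)) v = 0) :
    v ∈ varianceGrowthSubmodule T (urnStep w₀ b) fun n ↦ n := by
  obtain ⟨C, hC, hbound⟩ := exists_norm_transition_apply_sq_le hw₀ hb hv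
  have hδ : 0 < (b - 2 * lam.re) / 2 := by linarith
  set δ := (b - 2 * lam.re) / 2
  obtain ⟨D, hD, hpoly⟩ := exists_one_add_pow_le_mul_exp (2 * m) hδ
  have hstep := urnStep_nonneg hw₀ hb
  suffices h : ∀ n : ℕ, ∑ k ∈ Finset.range n,
      ‖transition T (fun j ↦ (urnStep w₀ b j : ℂ)) (k + 1) n v‖ ^ 2 ≤
        C * D * (Real.exp (δ * w₀⁻¹) / δ) * (w₀ + n * b) * 1 by
    exact (isBigO_of_forall_le_mul_activity (fun n ↦ by positivity) h).congr_right fun n ↦ mul_one _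
  intro n
  calc _ ≤ ∑ k ∈ Finset.range n, C * D * (w₀ + n * b) * (urnStep w₀ b k *
        Real.exp (-(δ * ∑ j ∈ Finset.Ico (k + 1) n, urnStep w₀ b j))) := by
        refine Finset.sum_le_sum fun k hk ↦ (hbound k n (Finset.mem_range.1 hk)).trans ?_
        set h := ∑ j ∈ Finset.Ico (k + 1) n, urnStep w₀ b j
        have hdecay : Real.exp (-((b - 2 * lam.re) * h)) * (1 + h) ^ (2 * m) ≤
            D * Real.exp (-(δ * h)) :=
          calc _ ≤ Real.exp (-((b - 2 * lam.re) * h)) * (D * Real.exp (δ * h)) := by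
                gcongr
                exact hpoly h (Finset.sum_nonneg fun j _ ↦ hstep j)
            _ = D * Real.exp (-(δ * h)) := by
                rw [mul_left_comm, ← Real.exp_add]
                congr 2
                ring
        have hk := hstep k
        calc _ ≤ C * (w₀ + n * b) * (urnStep w₀ b k * (D * Real.exp (-(δ * h)))) := by gcongr
          _ = _ := by ring
    _ ≤ C * D * (w₀ + n * b) * (Real.exp (δ * w₀⁻¹) / δ) := by
        rw [← Finset.mul_sum]
        gcongr
        exact sum_mul_exp_neg_le hstep (urnStep_le_inv hw₀ hb) hδ n
    _ = _ := by ring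

lemma isBigO_one_add_sum_urnStep_log (hw₀ : 0 < w₀) (hb : 0 < b) :
    (fun n ↦ 1 + ∑ k ∈ Finset.range n, urnStep w₀ b k) =O[atTop] fun n : ℕ ↦ Real.log n := by
  have hone : (fun _ : ℕ ↦ (1 : ℝ)) =O[atTop] fun n : ℕ ↦ Real.log n :=
    isBigO_const_of_tendsto_atTop (Real.tendsto_log_atTop.comp tendsto_natCast_atTop_atTop) 1
  have hsum : (fun n ↦ ∑ k ∈ Finset.range n, urnStep w₀ b k) =O[atTop]
      fun n : ℕ ↦ 1 + Real.log n :=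
    .of_bound (min w₀ b)⁻¹ (.of_forall fun n ↦ by
      rw [Real.norm_of_nonneg (Finset.sum_nonneg fun k _ ↦ urnStep_nonneg hw₀ hb k),
        Real.norm_of_nonneg (add_nonneg zero_le_one (Real.log_natCast_nonneg n))]
      exact sum_urnStep_le_log hw₀ hb n)
  exact hone.add (hsum.trans (hone.add (Asymptotics.isBigO_refl _ _)))

lemma mem_varianceGrowthSubmodule_of_re_le (hw₀ : 0 < w₀) (hb : 0 < b) (hlam : lam.re ≤ b / 2)
    (hv : ((T - algebraMap ℂ _ lam) ^ (m + 1)) v = 0) :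
    v ∈ varianceGrowthSubmodule T (urnStep w₀ b) fun n ↦ n * Real.log n ^ (2 * m + 1) := by
  obtain ⟨C, hC, hbound⟩ := exists_norm_transition_apply_sq_le hw₀ hb hv
  have hstep := urnStep_nonneg hw₀ hb
  set H : ℕ → ℝ := fun n ↦ ∑ k ∈ Finset.range n, urnStep w₀ b k
  have hH : ∀ n, 0 ≤ H n := fun n ↦ Finset.sum_nonneg fun j _ ↦ hstep j
  have hsum : ∀ n : ℕ, ∑ k ∈ Finset.range n,
      ‖transition T (fun j ↦ (urnStep w₀ b j : ℂ)) (k + 1) n v‖ ^ 2 ≤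
        C * (w₀ + n * b) * (1 + H n) ^ (2 * m + 1) := fun n ↦ by
    calc _ ≤ ∑ k ∈ Finset.range n, C * (w₀ + n * b) * (urnStep w₀ b k * (1 + H n) ^ (2 * m)) := by
          refine Finset.sum_le_sum fun k hk ↦ (hbound k n (Finset.mem_range.1 hk)).trans ?_
          have hk := hstep k
          have hh : 0 ≤ ∑ j ∈ Finset.Ico (k + 1) n, urnStep w₀ b j :=
            Finset.sum_nonneg fun j _ ↦ hstep j
          have hhH : ∑ j ∈ Finset.Ico (k + 1) n, urnStep w₀ b j ≤ H n :=
            Finset.sum_le_sum_of_subset_of_nonneg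
              (fun j hj ↦ Finset.mem_range.2 (Finset.mem_Ico.1 hj).2) fun j _ _ ↦ hstep j
          gcongr
          refine (mul_le_of_le_one_left (by positivity) ?_).trans (by gcongr)
          exact Real.exp_le_one_iff.2 (neg_nonpos.2 (mul_nonneg (by linarith) hh))
      _ = C * (w₀ + n * b) * (H n * (1 + H n) ^ (2 * m)) := by
          rw [← Finset.mul_sum, ← Finset.sum_mul]
      _ ≤ _ := by
          have := hH n
          rw [pow_succ']
          gcongr
          linarith
  exact (isBigO_of_forall_le_mul_activity (fun n ↦ by positivity) hsum).trans
    ((Asymptotics.isBigO_refl _ _).mul ((isBigO_one_add_sum_urnStep_log hw₀ hb).pow _))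

end VarianceGrowth

section Spectral

open Module.End

section EigenspaceDecomposition

variable {K V : Type*} [Field K] [AddCommGroup V] [Module K V] {f : Module.End K V}
  {α : Module.Dual K V} {lam : K}

lemma maxGenEigenspace_le_ker_of_comp_eq_smul (hα : α ∘ₗ f = lam • α) {mu : K} (hmu : mu ≠ lam) :
    maxGenEigenspace f mu ≤ LinearMap.ker α := fun v hv ↦ by
  obtain ⟨n, hn⟩ := (mem_maxGenEigenspace f mu v).1 hv
  have hpow : ∀ (n : ℕ) (v : V), α (((f - mu • 1) ^ n) v) = (lam - mu) ^ n * α v := fun n ↦ by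
    induction n with
    | zero => simp
    | succ n ih =>
      intro v
      have hv : α (f v) = lam * α v := congr($hα v)
      rw [pow_succ, Module.End.mul_apply, ih, LinearMap.sub_apply, map_sub, hv]
      simp only [LinearMap.smul_apply, Module.End.one_apply, map_smul, smul_eq_mul]
      ring
  have := hpow n v
  rw [hn, map_zero] at this
  exact (mul_eq_zero.1 this.symm).resolve_left (pow_ne_zero _ (sub_ne_zero.2 hmu.symm))

variable [IsAlgClosed K] [FiniteDimensional K V]

lemma maxGenEigenspace_sup_iSup_ne_eq_top (f : Module.End K V) (lam : K) :
    maxGenEigenspace f lam ⊔ ⨆ (mu) (_ : mu ≠ lam), maxGenEigenspace f mu = ⊤ := by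
  rw [eq_top_iff, ← iSup_maxGenEigenspace_eq_top f]
  refine iSup_le fun mu ↦ ?_
  by_cases hmu : mu = lam
  · exact hmu ▸ le_sup_left
  · exact le_sup_of_le_right (le_iSup₂_of_le mu hmu le_rfl)

lemma isCompl_maxGenEigenspace_iSup_ne (f : Module.End K V) (lam : K) :
    IsCompl (maxGenEigenspace f lam) (⨆ (mu) (_ : mu ≠ lam), maxGenEigenspace f mu) :=
  ⟨independent_maxGenEigenspace f lam,
    codisjoint_iff.2 (maxGenEigenspace_sup_iSup_ne_eq_top f lam)⟩

-- By the modular law, the kernel could only be larger than the supremum on the right by meeting,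
-- hence containing, the remaining line.
lemma ker_le_iSup_maxGenEigenspace_of_comp_eq_smul (hα : α ∘ₗ f = lam • α) (hα0 : α ≠ 0)
    (hmult : f.charpoly.rootMultiplicity lam ≤ 1) :
    LinearMap.ker α ≤ ⨆ (mu) (_ : mu ≠ lam), maxGenEigenspace f mu := by
  set S := ⨆ (mu) (_ : mu ≠ lam), maxGenEigenspace f mu
  have htop : maxGenEigenspace f lam ⊔ S = ⊤ := maxGenEigenspace_sup_iSup_ne_eq_top f lam
  have hS : S ≤ LinearMap.ker α :=
    iSup₂_le fun _ hmu ↦ maxGenEigenspace_le_ker_of_comp_eq_smul hα hmu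
  have hbot : maxGenEigenspace f lam ⊓ LinearMap.ker α = ⊥ := by
    by_contra hne
    have hle : maxGenEigenspace f lam ⊓ LinearMap.ker α = maxGenEigenspace f lam :=
      Submodule.eq_of_le_of_finrank_le inf_le_left <| by
        rw [LinearMap.finrank_maxGenEigenspace_eq]
        exact hmult.trans (Submodule.one_le_finrank_iff.2 hne)
    exact hα0 (LinearMap.ker_eq_top.1 (top_le_iff.1
      (htop ▸ sup_le (inf_eq_left.1 hle) hS)))
  calc LinearMap.ker α = (S ⊔ maxGenEigenspace f lam) ⊓ LinearMap.ker α := by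
        rw [sup_comm, htop, top_inf_eq]
    _ = S ⊔ maxGenEigenspace f lam ⊓ LinearMap.ker α := sup_inf_assoc_of_le _ hS
    _ ≤ S := by rw [hbot, sup_bot_eq]

end EigenspaceDecomposition

section NilpotencyIndex

variable {q : ℕ} {B P : Matrix (Fin q) (Fin q) ℂ} {lam : ℂ}

lemma toLin'_sub_algebraMap_pow_apply (n : ℕ) (v : Fin q → ℂ) :
    ((B.toLin' - algebraMap ℂ _ lam) ^ n) v = ((B - lam • 1) ^ n) *ᵥ v := by
  rw [← Matrix.toLin'_apply, Matrix.toLin'_pow, map_sub, map_smul, Matrix.toLin'_one]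
  rfl

lemma mem_maxGenEigenspace_toLin'_iff {v : Fin q → ℂ} :
    v ∈ maxGenEigenspace B.toLin' lam ↔ ((B - lam • 1) ^ q) *ᵥ v = 0 := by
  rw [maxGenEigenspace_eq_genEigenspace_finrank, Module.finrank_fin_fun, mem_genEigenspace_nat,
    LinearMap.mem_ker, ← toLin'_sub_algebraMap_pow_apply]
  rfl

lemma mem_spectrum_of_mem_maxGenEigenspace {v : Fin q → ℂ} (hv0 : v ≠ 0)
    (hv : v ∈ maxGenEigenspace B.toLin' lam) : lam ∈ spectrum ℂ B := by
  have hgen : HasUnifEigenvalue B.toLin' lam ⊤ := (Submodule.ne_bot_iff _).2 ⟨v, hv, hv0⟩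
  rw [← Matrix.spectrum_toLin']
  exact (hgen.lt zero_lt_one).mem_spectrum

lemma exists_isSpectralProj (B : Matrix (Fin q) (Fin q) ℂ) (lam : ℂ) :
    ∃ P, IsSpectralProj B lam P ∧ ∀ v, P *ᵥ v ∈ maxGenEigenspace B.toLin' lam := by
  have hcompl := isCompl_maxGenEigenspace_iSup_ne B.toLin' lam
  refine ⟨LinearMap.toMatrix' (Submodule.projection _ _ hcompl), ⟨fun v hv ↦ ?_,
    fun mu hmu v hv ↦ ?_⟩, fun v ↦ ?_⟩
  all_goals rw [LinearMap.toMatrix'_mulVec]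
  · exact Submodule.projection_apply_left hcompl ⟨v, mem_maxGenEigenspace_toLin'_iff.2 hv⟩
  · refine (Submodule.projection_apply_eq_zero_iff hcompl).2 ?_
    exact Submodule.mem_iSup_of_mem mu
      (Submodule.mem_iSup_of_mem hmu (mem_maxGenEigenspace_toLin'_iff.2 hv))
  · exact Submodule.projection_apply_mem hcompl v

lemma sub_smul_one_mulVec_mem_maxGenEigenspace {v : Fin q → ℂ}
    (hv : v ∈ maxGenEigenspace B.toLin' lam) :
    (B - lam • 1) *ᵥ v ∈ maxGenEigenspace B.toLin' lam := by
  rw [mem_maxGenEigenspace_toLin'_iff] at hv ⊢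
  rw [Matrix.mulVec_mulVec, ← pow_succ, pow_succ', ← Matrix.mulVec_mulVec, hv, Matrix.mulVec_zero]

lemma IsSpectralProj.sub_smul_one_mul_pow_mulVec (hP : IsSpectralProj B lam P) (n : ℕ)
    {v : Fin q → ℂ} (hv : v ∈ maxGenEigenspace B.toLin' lam) :
    ((B - lam • 1) * P) ^ n *ᵥ v = (B - lam • 1) ^ n *ᵥ v := by
  induction n generalizing v with
  | zero => simp
  | succ n ih =>
    rw [pow_succ, pow_succ, ← Matrix.mulVec_mulVec, ← Matrix.mulVec_mulVec,
      ← Matrix.mulVec_mulVec, hP.1 v (mem_maxGenEigenspace_toLin'_iff.1 hv),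
      ih (sub_smul_one_mulVec_mem_maxGenEigenspace hv)]

lemma exists_isSpectralProj_nilIndexOf (B : Matrix (Fin q) (Fin q) ℂ) (lam : ℂ) :
    ∃ P ν, IsSpectralProj B lam P ∧ NilIndexOf B lam P ν := by
  obtain ⟨P, hP, hrange⟩ := exists_isSpectralProj B lam
  have hnil : IsNilpotent ((B - lam • 1) * P) := ⟨q + 1, Matrix.ext_of_mulVec_single fun i ↦ by
    have hmem := sub_smul_one_mulVec_mem_maxGenEigenspace (hrange (Pi.single i 1))
    rw [pow_succ, ← Matrix.mulVec_mulVec, ← Matrix.mulVec_mulVec,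
      hP.sub_smul_one_mul_pow_mulVec q hmem, mem_maxGenEigenspace_toLin'_iff.1 hmem,
      Matrix.zero_mulVec]⟩
  refine ⟨P, nilpotencyClass ((B - lam • 1) * P) - 1, hP, ?_, ?_⟩
  · exact pow_eq_zero_of_le (by omega) (pow_nilpotencyClass hnil)
  · rcases Nat.eq_zero_or_pos (nilpotencyClass ((B - lam • 1) * P) - 1) with h0 | hpos
    · exact .inl h0
    · exact .inr (nilpotencyClass_eq_succ_iff.1 (by omega)).2

lemma sub_algebraMap_pow_succ_apply_eq_zero {N : ℕ}
    (hN : ∀ P ν, IsSpectralProj B lam P → NilIndexOf B lam P ν → ν ≤ N) {v : Fin q → ℂ}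
    (hv : v ∈ maxGenEigenspace B.toLin' lam) :
    ((B.toLin' - algebraMap ℂ _ lam) ^ (N + 1)) v = 0 := by
  obtain ⟨P, ν, hP, hν⟩ := exists_isSpectralProj_nilIndexOf B lam
  rw [toLin'_sub_algebraMap_pow_apply, ← hP.sub_smul_one_mul_pow_mulVec _ hv,
    pow_eq_zero_of_le (Nat.succ_le_succ (hN P ν hP hν)) hν.1, Matrix.zero_mulVec]

end NilpotencyIndex

end Spectral

section OperatorVariance

lemma exists_opNorm_sq_le_mul_sum {E F ι : Type*} [NormedAddCommGroup E] [NormedSpace ℝ E]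
    [FiniteDimensional ℝ E] [NormedAddCommGroup F] [NormedSpace ℝ F] [Fintype ι]
    (e : Module.Basis ι ℝ E) :
    ∃ C : ℝ, ∀ L : E →L[ℝ] F, ‖L‖ ^ 2 ≤ C * ∑ i, ‖L (e i)‖ ^ 2 := by
  obtain ⟨C, -, hC⟩ := e.exists_opNorm_le (F := F)
  refine ⟨C ^ 2, fun L ↦ ?_⟩
  have hsum : 0 ≤ ∑ i, ‖L (e i)‖ ^ 2 := by positivity
  have hle : ‖L‖ ≤ C * √(∑ i, ‖L (e i)‖ ^ 2) := hC (Real.sqrt_nonneg _) fun i ↦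
    Real.le_sqrt_of_sq_le <| Finset.single_le_sum (f := fun i ↦ ‖L (e i)‖ ^ 2)
      (fun _ _ ↦ sq_nonneg _) (Finset.mem_univ i)
  calc ‖L‖ ^ 2 ≤ (C * √(∑ i, ‖L (e i)‖ ^ 2)) ^ 2 := by gcongr
    _ = C ^ 2 * ∑ i, ‖L (e i)‖ ^ 2 := by rw [mul_pow, Real.sq_sqrt hsum]

lemma isBigO_sum_opNorm_transition_comp_sq {E V : Type*} [NormedAddCommGroup E] [NormedSpace ℝ E]
    [FiniteDimensional ℝ E] [NormedAddCommGroup V] [NormedSpace ℂ V] {T Q : E →L[ℝ] E}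
    {S : Module.End ℂ V} {J : E →ₗ[ℝ] V} (hJ : Function.Injective J)
    (hJT : ∀ v, J (T v) = S (J v)) {x s : ℕ → ℝ}
    (hQ : ∀ v, J (Q v) ∈ varianceGrowthSubmodule S x s) :
    (fun n ↦ ∑ k ∈ Finset.range n, ‖transition T x (k + 1) n ∘L Q‖ ^ 2) =O[atTop] s := by
  obtain ⟨K, -, hK⟩ := J.exists_antilipschitzWith (LinearMap.ker_eq_bot.2 hJ)
  have hdir : ∀ v, (fun n ↦ ∑ k ∈ Finset.range n, ‖transition T x (k + 1) n (Q v)‖ ^ 2)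
      =O[atTop] s := fun v ↦ by
    refine (Asymptotics.IsBigO.of_norm_le fun n ↦ ?_).trans
      (Asymptotics.IsBigO.const_mul_left (hQ v) (K ^ 2))
    rw [Real.norm_of_nonneg (by positivity), Finset.mul_sum]
    refine Finset.sum_le_sum fun k hk ↦ ?_
    rw [← mul_pow, ← transition_intertwine hJT x (Finset.mem_range.1 hk)]
    gcongr
    simpa using hK.le_mul_dist (transition T x (k + 1) n (Q v)) 0
  obtain ⟨C, hC⟩ := exists_opNorm_sq_le_mul_sum (F := E) (Module.finBasis ℝ E)
  refine (Asymptotics.IsBigO.of_norm_le fun n ↦ ?_).trans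
    ((Asymptotics.IsBigO.fun_sum (s := Finset.univ)
      fun i _ ↦ hdir (Module.finBasis ℝ E i)).const_mul_left C)
  rw [Real.norm_of_nonneg (by positivity), Finset.sum_comm, Finset.mul_sum]
  exact Finset.sum_le_sum fun k _ ↦ hC _

end OperatorVariance

section FluctuationScale

variable {q : ℕ}

/-- `s` is the variance scale of the fluctuations of an urn with complexified intensity matrix `B`
and balance `b`: `s_n = n` when `Re λ₂ < b / 2`, and `s_n = n (log n)^(2N+1)` when
`Re λ₂ ≤ b / 2`, where `N` bounds the nilpotency index of every candidate for `λ₂` on the critical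
line. -/
def IsFluctuationScale (B : Matrix (Fin q) (Fin q) ℂ) (b : ℝ) (s : ℕ → ℝ) : Prop :=
  ((∀ mu, MemSecondEigSet B b mu → mu.re < b / 2) ∧ s = fun n : ℕ ↦ (n : ℝ)) ∨
  ∃ N : ℕ, (∀ mu, MemSecondEigSet B b mu → mu.re ≤ b / 2) ∧
    (∀ mu P ν, MemSecondEigSet B b mu → mu.re = b / 2 → IsSpectralProj B mu P →
      NilIndexOf B mu P ν → ν ≤ N) ∧
    s = fun n : ℕ ↦ n * Real.log n ^ (2 * N + 1)

variable {B : Matrix (Fin q) (Fin q) ℂ} {w₀ b : ℝ} {s : ℕ → ℝ}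

lemma IsFluctuationScale.nonneg (hs : IsFluctuationScale B b s) (n : ℕ) : 0 ≤ s n := by
  rcases hs with ⟨-, rfl⟩ | ⟨N, -, -, rfl⟩
  · positivity
  · exact mul_nonneg n.cast_nonneg (pow_nonneg (Real.log_natCast_nonneg n) _)

lemma IsFluctuationScale.re_le (hs : IsFluctuationScale B b s) {mu : ℂ}
    (hmu : MemSecondEigSet B b mu) : mu.re ≤ b / 2 := by
  rcases hs with ⟨hlt, -⟩ | ⟨N, hle, -⟩
  exacts [(hlt mu hmu).le, hle mu hmu]

lemma IsFluctuationScale.mem_varianceGrowthSubmodule (hs : IsFluctuationScale B b s)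
    (hw₀ : 0 < w₀) (hb : 0 < b) {mu : ℂ} (hmu : MemSecondEigSet B b mu) {v : Fin q → ℂ}
    (hv : v ∈ Module.End.maxGenEigenspace B.toLin' mu) :
    v ∈ varianceGrowthSubmodule B.toLin' (urnStep w₀ b) s := by
  have hsmall (hlt : mu.re < b / 2) :
      v ∈ varianceGrowthSubmodule B.toLin' (urnStep w₀ b) fun n ↦ n := by
    refine mem_varianceGrowthSubmodule_of_re_lt (m := q) hw₀ hb hlt ?_
    rw [toLin'_sub_algebraMap_pow_apply, pow_succ', ← Matrix.mulVec_mulVec,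
      mem_maxGenEigenspace_toLin'_iff.1 hv, Matrix.mulVec_zero]
  rcases hs with ⟨hlt, rfl⟩ | ⟨N, hle, hN, rfl⟩
  · exact hsmall (hlt mu hmu)
  rcases (hle mu hmu).lt_or_eq with hlt | heq
  · have hlog : (fun _ : ℕ ↦ (1 : ℝ)) =O[atTop] fun n : ℕ ↦ Real.log n ^ (2 * N + 1) :=
      isBigO_const_of_tendsto_atTop ((tendsto_pow_atTop (by omega)).comp
        (Real.tendsto_log_atTop.comp tendsto_natCast_atTop_atTop)) 1
    exact Asymptotics.IsBigO.trans (hsmall hlt)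
      (((Asymptotics.isBigO_refl _ _).mul hlog).congr_left fun n ↦ mul_one _)
  · exact mem_varianceGrowthSubmodule_of_re_le hw₀ hb heq.le
      (sub_algebraMap_pow_succ_apply_eq_zero (fun P ν ↦ hN mu P ν hmu heq) hv)

lemma IsFluctuationScale.ker_le_varianceGrowthSubmodule (hs : IsFluctuationScale B b s)
    (hw₀ : 0 < w₀) (hb : 0 < b) {α : Module.Dual ℂ (Fin q → ℂ)}
    (hα : α ∘ₗ B.toLin' = (b : ℂ) • α) (hα0 : α ≠ 0) :
    LinearMap.ker α ≤ varianceGrowthSubmodule B.toLin' (urnStep w₀ b) s := by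
  have hmult : B.toLin'.charpoly.rootMultiplicity (b : ℂ) ≤ 1 := by
    rw [Matrix.charpoly_toLin']
    by_contra! hlt
    have := hs.re_le (.inr ⟨rfl, hlt⟩)
    rw [Complex.ofReal_re] at this
    linarith
  refine (ker_le_iSup_maxGenEigenspace_of_comp_eq_smul hα hα0 hmult).trans
    (iSup₂_le fun mu hmu v hv ↦ ?_)
  by_cases hv0 : v = 0
  · exact hv0 ▸ zero_mem _
  · exact hs.mem_varianceGrowthSubmodule hw₀ hb
      (.inl ⟨hmu, mem_spectrum_of_mem_maxGenEigenspace hv0 hv⟩) hv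

end FluctuationScale

section TailCriterion

variable {Ω ι E : Type*} [NormedAddCommGroup E] {m0 : MeasurableSpace Ω} {μ : Measure Ω}

lemma uniformIntegrable_of_setLIntegral_norm_rpow_le [IsFiniteMeasure μ] {p : ℝ} (hp : 1 ≤ p)
    {Y : ι → Ω → E} (hY : ∀ i, StronglyMeasurable (Y i))
    (htail : ∀ ε : ℝ, 0 < ε → ∃ M : ℝ, ∀ i,
      ∫⁻ ω in {ω | M < ‖Y i ω‖ ^ p}, ENNReal.ofReal (‖Y i ω‖ ^ p) ∂μ ≤ ENNReal.ofReal ε) :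
    UniformIntegrable Y (ENNReal.ofReal p) μ := by
  have hp0 : 0 < p := by linarith
  refine uniformIntegrable_of (ENNReal.one_le_ofReal.2 hp) ENNReal.ofReal_ne_top
    (fun i ↦ (hY i).aestronglyMeasurable) fun ε hε ↦ ?_
  obtain ⟨M, hM⟩ := htail (ε ^ p) (by positivity)
  refine ⟨Real.toNNReal ((|M| + 1) ^ p⁻¹), fun i ↦ ?_⟩
  set s := {ω | Real.toNNReal ((|M| + 1) ^ p⁻¹) ≤ ‖Y i ω‖₊}
  have hsub : s ⊆ {ω | M < ‖Y i ω‖ ^ p} := fun ω hω ↦ by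
    have hle : (|M| + 1) ^ p⁻¹ ≤ ‖Y i ω‖ := Real.toNNReal_le_iff_le_coe.1 hω
    calc M < |M| + 1 := (le_abs_self M).trans_lt (lt_add_one _)
      _ ≤ ‖Y i ω‖ ^ p := (Real.rpow_inv_le_iff_of_pos (by positivity) (norm_nonneg _) hp0).1 hle
  rw [eLpNorm_indicator_eq_eLpNorm_restrict
      (measurableSet_le measurable_const (hY i).nnnorm.measurable),
    eLpNorm_eq_lintegral_rpow_enorm_toReal (ENNReal.ofReal_pos.2 hp0).ne' ENNReal.ofReal_ne_top,
    ENNReal.toReal_ofReal hp0.le, one_div, ENNReal.rpow_inv_le_iff hp0,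
    ENNReal.ofReal_rpow_of_pos hε]
  calc ∫⁻ ω in s, ‖Y i ω‖ₑ ^ p ∂μ
      = ∫⁻ ω in s, ENNReal.ofReal (‖Y i ω‖ ^ p) ∂μ := by
        simp_rw [← ofReal_norm, ENNReal.ofReal_rpow_of_nonneg (norm_nonneg _) hp0.le]
    _ ≤ ∫⁻ ω in {ω | M < ‖Y i ω‖ ^ p}, ENNReal.ofReal (‖Y i ω‖ ^ p) ∂μ := lintegral_mono_set hsub
    _ ≤ ENNReal.ofReal (ε ^ p) := hM i

end TailCriterion

section LinearDrift

variable {Ω E : Type*} [NormedAddCommGroup E] [NormedSpace ℝ E] {T : E →L[ℝ] E} {x : ℕ → ℝ}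

lemma eq_sum_transition_apply_of_succ {u d : ℕ → E} (hu0 : u 0 = 0)
    (hu : ∀ n, u (n + 1) = u n + x n • T (u n) + d n) (n : ℕ) :
    u n = ∑ k ∈ Finset.range n, transition T x (k + 1) n (d k) := by
  induction n with
  | zero => simpa using hu0
  | succ n ih =>
    have hstep : ∀ k ∈ Finset.range n, transition T x (k + 1) (n + 1) (d k) =
        transition T x (k + 1) n (d k) + x n • T (transition T x (k + 1) n (d k)) :=
      fun k hk ↦ by rw [transition_succ T x (Finset.mem_range.1 hk)]; rfl
    rw [Finset.sum_range_succ, Finset.sum_congr rfl hstep, Finset.sum_add_distrib,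
      ← Finset.smul_sum, ← map_sum, ← ih, transition_self, hu]
    rfl

variable {m0 : MeasurableSpace Ω} {μ : Measure Ω} {ℱ : Filtration ℕ m0}

lemma sub_integral_ae_eq_innovationSum [CompleteSpace E] [IsProbabilityMeasure μ]
    {X : ℕ → Ω → E} (hX : ∀ n, Integrable (X n) μ) {x₀ : E} (hX0 : X 0 = fun _ ↦ x₀)
    (hdrift : ∀ n, μ[X (n + 1) - X n | ℱ n] =ᵐ[μ] fun ω ↦ x n • T (X n ω)) (n : ℕ) :
    (fun ω ↦ X n ω - ∫ ω', X n ω' ∂μ) =ᵐ[μ]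
      innovationSum μ ℱ (fun k ↦ transition T x (k + 1) n) (fun k ↦ X (k + 1) - X k) n := by
  have hmean : ∀ n, ∫ ω, X (n + 1) ω ∂μ = ∫ ω, X n ω ∂μ + x n • T (∫ ω, X n ω ∂μ) := fun n ↦ by
    rw [← T.integral_comp_comm (hX n), ← integral_smul, ← integral_congr_ae (hdrift n),
      integral_condExp, integral_sub' (hX (n + 1)) (hX n), add_sub_cancel]
  filter_upwards [ae_all_iff.2 hdrift] with ω hω
  rw [eq_sum_transition_apply_of_succ (T := T) (x := x)
    (u := fun n ↦ X n ω - ∫ ω', X n ω' ∂μ)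
    (d := fun n ↦ (X (n + 1) - X n - μ[X (n + 1) - X n | ℱ n]) ω) (by simp [hX0]) (fun n ↦ ?_) n]
  · simp only [innovationSum, Finset.sum_apply, Function.comp_apply]
  · simp only [Pi.sub_apply, hω, hmean, map_sub, smul_sub]
    abel

variable {F G : Type*} [NormedAddCommGroup F] [NormedSpace ℝ F] [NormedAddCommGroup G]
  [NormedSpace ℝ G]

lemma innovationSum_comp_ae_eq [CompleteSpace E] [CompleteSpace G] [IsFiniteMeasure μ]
    {ξ : ℕ → Ω → E} (hξ : ∀ k, Integrable (ξ k) μ) {φ : E →L[ℝ] G} {c : ℕ → G}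
    (hφ : ∀ k, φ ∘ ξ k =ᵐ[μ] fun _ ↦ c k) {Q : E →L[ℝ] E} (hQ : ∀ v, φ v = 0 → Q v = v)
    (L : ℕ → E →L[ℝ] F) (n : ℕ) :
    innovationSum μ ℱ (fun k ↦ L k ∘L Q) ξ n =ᵐ[μ] innovationSum μ ℱ L ξ n := by
  have hinn : ∀ k, ∀ᵐ ω ∂μ, φ ((ξ k - μ[ξ k | ℱ k]) ω) = 0 := fun k ↦ by
    filter_upwards [hφ k, φ.comp_condExp_comm (hξ k) (m := ℱ k),
      condExp_congr_ae (m := ℱ k) (hφ k)] with ω h1 h2 h3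
    rw [condExp_const (ℱ.le k)] at h3
    rw [Pi.sub_apply, map_sub, ← Function.comp_apply (f := φ), h1, ← Function.comp_apply (f := φ),
      h2, h3, sub_self]
  filter_upwards [ae_all_iff.2 hinn] with ω hω
  simp only [innovationSum, Finset.sum_apply, Function.comp_apply, ContinuousLinearMap.comp_apply,
    hQ _ (hω _)]

lemma innovationSum_smul (c : ℝ) (L : ℕ → E →L[ℝ] F) (ξ : ℕ → Ω → E) (n : ℕ) :
    innovationSum μ ℱ (fun k ↦ c • L k) ξ n = c • innovationSum μ ℱ L ξ n := by
  rw [innovationSum, innovationSum, Finset.smul_sum]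
  rfl

lemma exists_sum_nnnorm_smul_sq_le {L : ℕ → ℕ → E} {s : ℕ → ℝ} (hs : ∀ n, 0 ≤ s n)
    (hL : (fun n ↦ ∑ k ∈ Finset.range n, ‖L n k‖ ^ 2) =O[atTop] s) :
    ∃ C : NNReal, ∀ n, ∑ k ∈ Finset.range n, ‖(1 / √(s n)) • L n k‖₊ ^ 2 ≤ C := by
  have hone : (fun n ↦ (s n)⁻¹ * s n) =O[atTop] fun _ ↦ (1 : ℝ) :=
    .of_norm_le fun n ↦ by
      rw [Real.norm_of_nonneg (mul_nonneg (inv_nonneg.2 (hs n)) (hs n))]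
      exact inv_mul_le_one
  obtain ⟨C, hC⟩ := Asymptotics.isBigO_one_nat_atTop_iff.1
    (((Asymptotics.isBigO_refl (fun n ↦ (s n)⁻¹) atTop).mul hL).trans hone)
  refine ⟨C.toNNReal, fun n ↦ NNReal.coe_le_coe.1 ?_⟩
  calc ((∑ k ∈ Finset.range n, ‖(1 / √(s n)) • L n k‖₊ ^ 2 : NNReal) : ℝ)
      = (s n)⁻¹ * ∑ k ∈ Finset.range n, ‖L n k‖ ^ 2 := by
        push_cast
        simp only [norm_smul, mul_pow, sq_abs, Real.norm_eq_abs, one_div, inv_pow,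
          Real.sq_sqrt (hs n), Finset.mul_sum]
    _ ≤ C := (Real.le_norm_self _).trans (hC n)
    _ ≤ C.toNNReal := Real.le_coe_toNNReal C

end LinearDrift

section Urn

variable {q : ℕ}

/-- Coordinatewise inclusion of `ℝ^q` into `ℂ^q`. -/
noncomputable def complexify (q : ℕ) : EuclideanSpace ℝ (Fin q) →ₗ[ℝ] Fin q → ℂ :=
  Complex.ofRealCLM.toLinearMap.compLeft (Fin q) ∘ₗ (WithLp.linearEquiv 2 ℝ (Fin q → ℝ)).toLinearMap

lemma complexify_apply (v : EuclideanSpace ℝ (Fin q)) :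
    complexify q v = Complex.ofRealHom ∘ v.ofLp := rfl

lemma complexify_injective : Function.Injective (complexify q) :=
  (Complex.ofReal_injective.comp_left).comp (WithLp.linearEquiv 2 ℝ (Fin q → ℝ)).injective

lemma complexify_toEuclideanCLM (A : Matrix (Fin q) (Fin q) ℝ) (v : EuclideanSpace ℝ (Fin q)) :
    complexify q (toEuclideanCLM (𝕜 := ℝ) A v) =
      (A.map Complex.ofRealHom).toLin' (complexify q v) := by
  rw [complexify_apply, ofLp_toEuclideanCLM]
  exact funext fun i ↦ RingHom.map_mulVec Complex.ofRealHom A v.ofLp i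

lemma dotProductEquiv_comp_toLin'_map_ofReal {A : Matrix (Fin q) (Fin q) ℝ} {a : Fin q → ℝ} {b : ℝ}
    (hA : vecMul a A = b • a) :
    dotProductEquiv ℂ (Fin q) (Complex.ofRealHom ∘ a) ∘ₗ (A.map Complex.ofRealHom).toLin' =
      (b : ℂ) • dotProductEquiv ℂ (Fin q) (Complex.ofRealHom ∘ a) := by
  have hAℂ : vecMul (Complex.ofRealHom ∘ a) (A.map Complex.ofRealHom) =
      (b : ℂ) • (Complex.ofRealHom ∘ a) := funext fun i ↦ by
    rw [← RingHom.map_vecMul, hA]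
    exact Complex.ofReal_mul _ _
  refine LinearMap.ext fun v ↦ ?_
  rw [LinearMap.comp_apply, toLin'_apply, dotProductEquiv_apply_apply, dotProduct_mulVec, hAℂ,
    smul_dotProduct, LinearMap.smul_apply, dotProductEquiv_apply_apply]

lemma innerSL_toLp_apply (a : Fin q → ℝ) (v : EuclideanSpace ℝ (Fin q)) :
    innerSL ℝ (WithLp.toLp 2 a) v = ∑ j, a j * v j := by
  simp [PiLp.inner_apply, mul_comm]

lemma dotProductEquiv_complexify (a : Fin q → ℝ) (v : EuclideanSpace ℝ (Fin q)) :
    dotProductEquiv ℂ (Fin q) (Complex.ofRealHom ∘ a) (complexify q v) =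
      ((innerSL ℝ (WithLp.toLp 2 a) v : ℝ) : ℂ) := by
  rw [innerSL_toLp_apply, dotProductEquiv_apply_apply, complexify_apply]
  simp [dotProduct]

/-- The hypotheses on a balanced Pólya urn with composition `X`, activity vector `a`, balance `b`
and intensity matrix `A`, started from `x₀`. -/
structure IsBalancedUrn {Ω : Type*} {m0 : MeasurableSpace Ω} (μ : Measure Ω) (ℱ : Filtration ℕ m0)
    (a : Fin q → ℝ) (b : ℝ) (A : Matrix (Fin q) (Fin q) ℝ)
    (x₀ : EuclideanSpace ℝ (Fin q)) (X : ℕ → Ω → EuclideanSpace ℝ (Fin q)) : Prop where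
  balance_pos : 0 < b
  vecMul_eq : vecMul a A = b • a
  adapted : Adapted ℱ X
  integrable (n : ℕ) : Integrable (X n) μ
  zero_eq : X 0 = fun _ ↦ x₀
  initial_weight_pos : 0 < ∑ j, a j * x₀ j
  weight_ae_eq (n : ℕ) : ∀ᵐ ω ∂μ, ∑ j, a j * X n ω j = (∑ j, a j * x₀ j) + (n : ℝ) * b
  condExp_ae_eq (n : ℕ) : μ[fun ω ↦ X (n + 1) ω - X n ω | ℱ n] =ᵐ[μ]
    fun ω ↦ ((∑ j, a j * x₀ j) + (n : ℝ) * b)⁻¹ • toEuclideanCLM (𝕜 := ℝ) A (X n ω)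

namespace IsBalancedUrn

variable {Ω : Type*} {m0 : MeasurableSpace Ω} {μ : Measure Ω} {ℱ : Filtration ℕ m0}
  {a : Fin q → ℝ} {b : ℝ} {A : Matrix (Fin q) (Fin q) ℝ} {x₀ : EuclideanSpace ℝ (Fin q)}
  {X : ℕ → Ω → EuclideanSpace ℝ (Fin q)}

lemma stronglyMeasurable_increment (hX : IsBalancedUrn μ ℱ a b A x₀ X) (n : ℕ) :
    StronglyMeasurable[ℱ (n + 1)] (X (n + 1) - X n) :=
  ((hX.adapted (n + 1)).sub ((hX.adapted n).mono (ℱ.mono n.le_succ) le_rfl)).stronglyMeasurable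

lemma weight_increment_ae_eq (hX : IsBalancedUrn μ ℱ a b A x₀ X) (n : ℕ) :
    innerSL ℝ (WithLp.toLp 2 a) ∘ (X (n + 1) - X n) =ᵐ[μ] fun _ ↦ b := by
  filter_upwards [hX.weight_ae_eq n, hX.weight_ae_eq (n + 1)] with ω hn hn1
  rw [Function.comp_apply, Pi.sub_apply, map_sub, innerSL_toLp_apply, innerSL_toLp_apply, hn, hn1]
  push_cast
  ring

lemma sub_integral_ae_eq [IsProbabilityMeasure μ] (hX : IsBalancedUrn μ ℱ a b A x₀ X)
    {Q : EuclideanSpace ℝ (Fin q) →L[ℝ] EuclideanSpace ℝ (Fin q)}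
    (hQ : ∀ v, innerSL ℝ (WithLp.toLp 2 a) v = 0 → Q v = v) (n : ℕ) :
    (fun ω ↦ X n ω - ∫ ω', X n ω' ∂μ) =ᵐ[μ] innovationSum μ ℱ
      (fun k ↦ transition (toEuclideanCLM (𝕜 := ℝ) A) (urnStep (∑ j, a j * x₀ j) b) (k + 1) n ∘L Q)
      (fun k ↦ X (k + 1) - X k) n :=
  (sub_integral_ae_eq_innovationSum hX.integrable hX.zero_eq hX.condExp_ae_eq n).trans
    (innovationSum_comp_ae_eq (fun k ↦ (hX.integrable (k + 1)).sub (hX.integrable k))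
      hX.weight_increment_ae_eq hQ _ n).symm

lemma isBigO_sum_opNorm_sq (hX : IsBalancedUrn μ ℱ a b A x₀ X) {s : ℕ → ℝ}
    (hs : IsFluctuationScale (A.map Complex.ofRealHom) b s)
    {Q : EuclideanSpace ℝ (Fin q) →L[ℝ] EuclideanSpace ℝ (Fin q)}
    (hQ : ∀ v, innerSL ℝ (WithLp.toLp 2 a) (Q v) = 0) :
    (fun n ↦ ∑ k ∈ Finset.range n, ‖transition (toEuclideanCLM (𝕜 := ℝ) A)
      (urnStep (∑ j, a j * x₀ j) b) (k + 1) n ∘L Q‖ ^ 2) =O[atTop] s := by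
  have ha : dotProductEquiv ℂ (Fin q) (Complex.ofRealHom ∘ a) ≠ 0 := fun h ↦ by
    refine hX.initial_weight_pos.ne' ?_
    rw [← innerSL_toLp_apply, ← Complex.ofReal_eq_zero, ← dotProductEquiv_complexify, h,
      LinearMap.zero_apply]
  refine isBigO_sum_opNorm_transition_comp_sq complexify_injective
    (complexify_toEuclideanCLM A) fun v ↦
      hs.ker_le_varianceGrowthSubmodule hX.initial_weight_pos hX.balance_pos
        (dotProductEquiv_comp_toLin'_map_ofReal hX.vecMul_eq) ha ?_
  rw [LinearMap.mem_ker, dotProductEquiv_complexify, hQ, Complex.ofReal_zero]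

theorem uniformIntegrable_smul_sub_integral [IsProbabilityMeasure μ]
    (hX : IsBalancedUrn μ ℱ a b A x₀ X) {s : ℕ → ℝ}
    (hs : IsFluctuationScale (A.map Complex.ofRealHom) b s) {p : ℝ} (hp : 2 ≤ p)
    (hui : UniformIntegrable (fun n ↦ X (n + 1) - X n) (ENNReal.ofReal p) μ) :
    UniformIntegrable (fun n ω ↦ (1 / √(s n)) • (X n ω - ∫ ω', X n ω' ∂μ))
      (ENNReal.ofReal p) μ := by
  obtain ⟨π, hπ⟩ :=
    (innerSL ℝ (WithLp.toLp 2 a)).ker_closedComplemented_of_finiteDimensional_range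
  let Q := (Submodule.subtypeL _) ∘L π
  obtain ⟨C, hC⟩ := exists_sum_nnnorm_smul_sq_le hs.nonneg
    (hX.isBigO_sum_opNorm_sq hs (Q := Q) fun v ↦ (π v).2)
  refine (uniformIntegrable_innovationSum (ℱ := ℱ) hp hX.stronglyMeasurable_increment hui hC).ae_eq
    fun n ↦ ?_
  rw [innovationSum_smul]
  exact (hX.sub_integral_ae_eq (Q := Q)
    (fun v hv ↦ congrArg Subtype.val (hπ ⟨v, hv⟩)) n).symm.const_smul (1 / √(s n))

end IsBalancedUrn

theorem urn_clt_moment_convergence_of_unifIntegrable_general {Ω : Type*} {m0 : MeasurableSpace Ω}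
    {μ : Measure Ω} [IsProbabilityMeasure μ] {ℱ : Filtration ℕ m0} {a : Fin q → ℝ} {b : ℝ}
    {A : Matrix (Fin q) (Fin q) ℝ} {x₀ : EuclideanSpace ℝ (Fin q)}
    {X : ℕ → Ω → EuclideanSpace ℝ (Fin q)} (hX : IsBalancedUrn μ ℱ a b A x₀ X)
    {s : ℕ → ℝ} (hs : IsFluctuationScale (A.map fun x : ℝ ↦ (x : ℂ)) b s) {p : ℝ} (hp : 2 ≤ p)
    (hui : ∀ ε : ℝ, 0 < ε → ∃ M : ℝ, ∀ n : ℕ,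
      ∫⁻ ω in {ω | M < ‖X (n + 1) ω - X n ω‖ ^ p},
        ENNReal.ofReal (‖X (n + 1) ω - X n ω‖ ^ p) ∂μ ≤ ENNReal.ofReal ε)
    {ν : Measure (EuclideanSpace ℝ (Fin q))} [IsFiniteMeasure ν]
    (hweak : ∀ f : BoundedContinuousFunction (EuclideanSpace ℝ (Fin q)) ℝ,
      Tendsto (fun n : ℕ ↦ ∫ ω, f ((1 / √(s n)) • (X n ω - ∫ ω', X n ω' ∂μ)) ∂μ) atTop
        (nhds (∫ x, f x ∂ν)))
    {f : EuclideanSpace ℝ (Fin q) → ℝ} (hf : Continuous f) {C : NNReal}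
    (hfC : ∀ x, |f x| ≤ C * (1 + ‖x‖ ^ p)) :
    Tendsto (fun n : ℕ ↦ ∫ ω, f ((1 / √(s n)) • (X n ω - ∫ ω', X n ω' ∂μ)) ∂μ) atTop
      (nhds (∫ x, f x ∂ν)) := by
  have hξ := uniformIntegrable_of_setLIntegral_norm_rpow_le (by linarith)
    (fun n ↦ (hX.stronglyMeasurable_increment n).mono (ℱ.le _)) hui
  have hY := hX.uniformIntegrable_smul_sub_integral hs hp hξ
  exact tendsto_integral_of_uniformIntegrable hf
    (uniformIntegrable_comp_of_abs_le_rpow (by linarith) hY hf hfC) hweak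

end Urn

/-- Under the Pólya urn hypotheses, let p ≥ 2 be fixed and assume that the
family {|X_{n+1} − X_n|^p : n ≥ 0} is uniformly integrable. Assume also either
(a) Re λ₂ < b/2 and (X_n − E X_n)/√n ⇒ N(0, Σ), or
(b) Re λ₂ = b/2 and (X_n − E X_n)/√(n (log n)^{2ν₂+1}) ⇒ N(0, Σ), ν₂ := ν_{λ₂}.
Then the corresponding convergence in distribution holds together with convergence of all
absolute moments of order r with 1 ≤ r ≤ p and of all mixed moments of total degree ≤ p.
(N(0, Σ) is characterized by: every linear image l·Z has the one-dimensional law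
N(0, l'Σl); uniform integrability of (Z_t) means: ∀ ε > 0 there is M with
E[|Z_t| 1{|Z_t| > M}] ≤ ε for all t.) -/
theorem urn_clt_moment_convergence_of_unifIntegrable
    (q : ℕ) (hq : 2 ≤ q) {Ω : Type} {m0 : MeasurableSpace Ω}
    (μ : Measure Ω) [IsProbabilityMeasure μ] (ℱ : Filtration ℕ m0)
    (a : Fin q → ℝ) (b : ℝ) (hb : 0 < b)
    (A : Matrix (Fin q) (Fin q) ℝ) (hA : Matrix.vecMul a A = b • a)
    (X : ℕ → Ω → EuclideanSpace ℝ (Fin q)) (hadp : Adapted ℱ X)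
    (hXint : ∀ n, Integrable (X n) μ)
    (x₀ : EuclideanSpace ℝ (Fin q)) (hX0 : X 0 = fun _ => x₀)
    (hw₀ : 0 < ∑ j, a j * x₀ j)
    (hwn : ∀ n : ℕ, ∀ᵐ ω ∂μ, ∑ j, a j * X n ω j = (∑ j, a j * x₀ j) + (n : ℝ) * b)
    (hcond : ∀ n : ℕ, μ[fun ω => X (n + 1) ω - X n ω | ℱ n] =ᵐ[μ]
      fun ω => ((∑ j, a j * x₀ j) + (n : ℝ) * b)⁻¹ • (Matrix.toEuclideanCLM (𝕜 := ℝ) A (X n ω)))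
    (p : ℝ) (hp : 2 ≤ p)
    (hui : ∀ ε : ℝ, 0 < ε → ∃ M : ℝ, ∀ n : ℕ,
      ∫⁻ ω in {ω | M < ‖X (n + 1) ω - X n ω‖ ^ p},
        ENNReal.ofReal (‖X (n + 1) ω - X n ω‖ ^ p) ∂μ ≤ ENNReal.ofReal ε)
    (hspec : (b : ℂ) ∈ spectrum ℂ (A.map (fun x : ℝ => (x : ℂ))))
    (hmax : ∀ mu ∈ spectrum ℂ (A.map (fun x : ℝ => (x : ℂ))), mu.re ≤ b)
    (Sig : Matrix (Fin q) (Fin q) ℝ) (hSig : Sig.PosSemidef)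
    (νlim : Measure (EuclideanSpace ℝ (Fin q))) (hνlim : IsProbabilityMeasure νlim)
    (hGauss : ∀ l : Fin q → ℝ,
      Measure.map (fun x : EuclideanSpace ℝ (Fin q) => ∑ j, l j * x j) νlim =
        ProbabilityTheory.gaussianReal 0 (Real.toNNReal (∑ i, ∑ j, l i * Sig i j * l j))) :
    -- Case (a): Re λ₂ < b/2, scaling √n.
    ((∀ mu : ℂ, MemSecondEigSet (A.map (fun x : ℝ => (x : ℂ))) b mu → mu.re < b / 2) →
      (∀ f : BoundedContinuousFunction (EuclideanSpace ℝ (Fin q)) ℝ,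
        Tendsto (fun n : ℕ =>
            ∫ ω, f ((1 / Real.sqrt n) • (X n ω - ∫ ω', X n ω' ∂μ)) ∂μ)
          atTop (nhds (∫ x, f x ∂νlim))) →
      (∀ r : ℝ, 1 ≤ r → r ≤ p →
        Tendsto (fun n : ℕ =>
            ∫ ω, ‖(1 / Real.sqrt n) • (X n ω - ∫ ω', X n ω' ∂μ)‖ ^ r ∂μ)
          atTop (nhds (∫ x, ‖x‖ ^ r ∂νlim))) ∧
      (∀ α : Fin q → ℕ, (∑ j, (α j : ℝ)) ≤ p →
        Tendsto (fun n : ℕ =>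
            ∫ ω, ∏ j, ((1 / Real.sqrt n) • (X n ω - ∫ ω', X n ω' ∂μ) :
              EuclideanSpace ℝ (Fin q)) j ^ α j ∂μ)
          atTop (nhds (∫ x : EuclideanSpace ℝ (Fin q), ∏ j, x j ^ α j ∂νlim)))) ∧
    -- Case (b): Re λ₂ = b/2, scaling √(n (log n)^{2ν₂+1}).
    (∀ (lam2 : ℂ) (P2 : Matrix (Fin q) (Fin q) ℂ) (ν₂ : ℕ),
      MemSecondEigSet (A.map (fun x : ℝ => (x : ℂ))) b lam2 → lam2.re = b / 2 →
      (∀ mu : ℂ, MemSecondEigSet (A.map (fun x : ℝ => (x : ℂ))) b mu → mu.re ≤ b / 2) →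
      IsSpectralProj (A.map (fun x : ℝ => (x : ℂ))) lam2 P2 →
      NilIndexOf (A.map (fun x : ℝ => (x : ℂ))) lam2 P2 ν₂ →
      (∀ (mu : ℂ) (P' : Matrix (Fin q) (Fin q) ℂ) (ν' : ℕ),
        MemSecondEigSet (A.map (fun x : ℝ => (x : ℂ))) b mu → mu.re = b / 2 →
        IsSpectralProj (A.map (fun x : ℝ => (x : ℂ))) mu P' →
        NilIndexOf (A.map (fun x : ℝ => (x : ℂ))) mu P' ν' → ν' ≤ ν₂) →
      (∀ f : BoundedContinuousFunction (EuclideanSpace ℝ (Fin q)) ℝ,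
        Tendsto (fun n : ℕ =>
            ∫ ω, f ((1 / Real.sqrt ((n : ℝ) * Real.log n ^ (2 * ν₂ + 1))) •
              (X n ω - ∫ ω', X n ω' ∂μ)) ∂μ)
          atTop (nhds (∫ x, f x ∂νlim))) →
      (∀ r : ℝ, 1 ≤ r → r ≤ p →
        Tendsto (fun n : ℕ =>
            ∫ ω, ‖(1 / Real.sqrt ((n : ℝ) * Real.log n ^ (2 * ν₂ + 1))) •
              (X n ω - ∫ ω', X n ω' ∂μ)‖ ^ r ∂μ)
          atTop (nhds (∫ x, ‖x‖ ^ r ∂νlim))) ∧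
      (∀ α : Fin q → ℕ, (∑ j, (α j : ℝ)) ≤ p →
        Tendsto (fun n : ℕ =>
            ∫ ω, ∏ j, ((1 / Real.sqrt ((n : ℝ) * Real.log n ^ (2 * ν₂ + 1))) •
              (X n ω - ∫ ω', X n ω' ∂μ) : EuclideanSpace ℝ (Fin q)) j ^ α j ∂μ)
          atTop (nhds (∫ x : EuclideanSpace ℝ (Fin q), ∏ j, x j ^ α j ∂νlim)))) := by
  have hX : IsBalancedUrn μ ℱ a b A x₀ X := ⟨hb, hA, hadp, hXint, hX0, hw₀, hwn, hcond⟩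
  have moments {s : ℕ → ℝ} (hs : IsFluctuationScale (A.map fun x : ℝ ↦ (x : ℂ)) b s)
      (hweak : ∀ f : BoundedContinuousFunction (EuclideanSpace ℝ (Fin q)) ℝ,
        Tendsto (fun n : ℕ ↦ ∫ ω, f ((1 / √(s n)) • (X n ω - ∫ ω', X n ω' ∂μ)) ∂μ) atTop
          (nhds (∫ x, f x ∂νlim))) :=
    have limit {f : EuclideanSpace ℝ (Fin q) → ℝ} (hf : Continuous f)
        (hfp : ∀ x, |f x| ≤ 1 + ‖x‖ ^ p) :=
      urn_clt_moment_convergence_of_unifIntegrable_general hX hs hp hui hweak hf (C := 1)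
        (by simpa only [NNReal.coe_one, one_mul] using hfp)
    And.intro
      (fun r (hr1 : 1 ≤ r) (hrp : r ≤ p) ↦
        limit (continuous_norm.rpow_const fun _ ↦ .inr (by linarith)) fun x ↦ by
          rw [abs_of_nonneg (by positivity)]
          exact rpow_le_one_add_rpow (by linarith) hrp (norm_nonneg x))
      (fun (α : Fin q → ℕ) (hα : ∑ j, (α j : ℝ) ≤ p) ↦
        limit (f := fun x ↦ ∏ j, x j ^ α j) (by fun_prop) (abs_prod_pow_le_one_add_norm_rpow hα))
  exact ⟨fun hlt hweak ↦ moments (.inl ⟨hlt, rfl⟩) hweak,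
    fun _ _ ν₂ _ _ hle _ _ hν₂ hweak ↦ moments (.inr ⟨ν₂, hle, hν₂, rfl⟩) hweak⟩
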